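/- Let q = 2^k + 1 for some integer k ≥ 2. Let L be a real vector subspace of the q×q complex matrices consisting entirely of Hermitian matrices, and suppose that every nonzero X ∈ L has at least 2 positive eigenvalues and at least 2 negative eigenvalues (counted with multiplicity). Then the real dimension of L is at most q² − (4q − 3). -/

import Mathlib

open Matrix

/-- The number of positive eigenvalues (counted with multiplicity) of a Hermitian matrix. -/
noncomputable def posEigCount {n : Type*} [Fintype n] [DecidableEq n]
    {A : Matrix n n ℂ} (hA : A.IsHermitian) : ℕ :=
  (Finset.univ.filter fun i => 0 < hA.eigenvalues i).card

/-- The number of negative eigenvalues (counted with multiplicity) of a Hermitian matrix. -/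
noncomputable def negEigCount {n : Type*} [Fintype n] [DecidableEq n]
    {A : Matrix n n ℂ} (hA : A.IsHermitian) : ℕ :=
  (Finset.univ.filter fun i => hA.eigenvalues i < 0).card

/-!
Put `n = 2 ^ k`. If `L` had codimension at most `4 n` among the Hermitian matrices of size `n + 1`,
it would contain all common zeros of `4 n` real linear forms, and we exhibit a nonzero common zero
of rank at most three. The candidates are `W C Wᴴ`, where the columns of `W` are two vectors
`z, f ∈ ℂⁿ`, taken from a real subspace of dimension `2 n - 1`, and one further fixed basis vector,
and where `C` runs through a seven-dimensional space of Hermitian `3 × 3` matrices; orthogonality of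
`z` and `f` makes such a matrix nonzero. Changing the signs of `z`, `f` and `C` multiplies all
functions involved by characters of `(ℤ/2)³`, so the zeros are counted modulo two by a Borsuk-Ulam
degree that depends on the characters alone. It is computed by eliminating one function at a time,
and comes out as `(2 n - 1).choose (n - 1)`, which is odd because `n` is a power of two.
-/

open Finset

section ModTwo

variable {α ι : Type*}

open Classical in
/-- The Iverson bracket `[p]` with values in `ZMod 2`, for counting modulo two. -/
noncomputable def iverson (p : Prop) : ZMod 2 := if p then 1 else 0

lemma iverson_of_true {p : Prop} (h : p) : iverson p = 1 := if_pos h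

lemma iverson_of_false {p : Prop} (h : ¬p) : iverson p = 0 := if_neg h

lemma iverson_and (p q : Prop) : iverson (p ∧ q) = iverson p * iverson q := by
  by_cases hp : p <;> by_cases hq : q <;> simp [iverson, hp, hq]

lemma iverson_exists (p : ι → Prop) : iverson (∃ i, p i) = 1 + iverson (∀ i, ¬p i) := by
  by_cases h : ∃ i, p i
  · rw [iverson_of_true h, iverson_of_false (by simpa using h), add_zero]
  · rw [iverson_of_false h, iverson_of_true (by simpa using h), CharTwo.add_self_eq_zero]

lemma iverson_forall_mem (s : Finset ι) (p : ι → Prop) :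
    iverson (∀ i ∈ s, p i) = ∏ i ∈ s, iverson (p i) := by
  by_cases h : ∀ i ∈ s, p i
  · rw [iverson_of_true h, prod_eq_one fun i hi => iverson_of_true (h i hi)]
  · rw [iverson_of_false h]
    push Not at h
    obtain ⟨i, hi, hpi⟩ := h
    exact (prod_eq_zero hi (iverson_of_false hpi)).symm

lemma iverson_forall [Fintype ι] (p : ι → Prop) : iverson (∀ i, p i) = ∏ i, iverson (p i) := by
  simpa using iverson_forall_mem univ p

lemma sum_iverson_eq_card {s t : Finset α} {p : α → Prop} (h : ∀ a, a ∈ s ∧ p a ↔ a ∈ t) :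
    ∑ a ∈ s, iverson (p a) = #t := by
  classical
  have hst : s.filter p = t := by ext a; rw [mem_filter, h]
  simp only [iverson, sum_boole, hst]

lemma zmod_two_eq_zero_or_one (ε : ZMod 2) : ε = 0 ∨ ε = 1 := by
  revert ε; decide

lemma zmod_two_pi_add_self (g : ι → ZMod 2) : g + g = 0 :=
  funext fun i => CharTwo.add_self_eq_zero (g i)

end ModTwo

section SignFlip

variable {ι β M : Type*} [Fintype β]

/-- The action of `g` in the elementary abelian 2-group `β → ZMod 2` on coordinate vectors: the
coordinate `k` is multiplied by the value `(-1) ^ (χ k ⬝ᵥ g)` at `g` of its character `χ k`. -/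
def signFlip [AddCommGroup M] (χ : ι → β → ZMod 2) (g : β → ZMod 2) (x : ι → M) : ι → M :=
  fun k => (-1 : ℤˣ) ^ (χ k ⬝ᵥ g) • x k

lemma signFlip_zero [AddCommGroup M] (χ : ι → β → ZMod 2) (x : ι → M) : signFlip χ 0 x = x := by
  funext k
  simp only [signFlip, dotProduct_zero, uzpow_zero, one_smul]

lemma signFlip_add [AddCommGroup M] (χ : ι → β → ZMod 2) (g h : β → ZMod 2) (x : ι → M) :
    signFlip χ (g + h) x = signFlip χ g (signFlip χ h x) := by
  funext k
  simp only [signFlip, dotProduct_add, uzpow_add, mul_smul]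

lemma natAbs_signFlip (χ : ι → β → ZMod 2) (g : β → ZMod 2) (x : ι → ℤ) (k : ι) :
    (signFlip χ g x k).natAbs = (x k).natAbs := by
  rw [signFlip]
  rcases zmod_two_eq_zero_or_one (χ k ⬝ᵥ g) with h | h <;> simp [h]

/-- The sign of `x` as an element of `ZMod 2`, where the sign of `0` is declared to be `tie`. -/
def signBit [Zero M] [LinearOrder M] (x : M) (tie : ZMod 2) : ZMod 2 :=
  if 0 < x then 0 else if x < 0 then 1 else tie

lemma signBit_of_pos [Zero M] [LinearOrder M] {x : M} (hx : 0 < x) (tie : ZMod 2) :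
    signBit x tie = 0 := if_pos hx

lemma signBit_of_neg [Zero M] [LinearOrder M] {x : M} (hx : x < 0) (tie : ZMod 2) :
    signBit x tie = 1 := by
  rw [signBit, if_neg hx.not_gt, if_pos hx]

lemma signBit_zero [Zero M] [LinearOrder M] (tie : ZMod 2) : signBit (0 : M) tie = tie := by
  simp [signBit]

lemma signBit_sign_smul [AddCommGroup M] [LinearOrder M] [IsOrderedAddMonoid M]
    (ε : ZMod 2) (x : M) (tie : ZMod 2) :
    signBit ((-1 : ℤˣ) ^ ε • x) (ε + tie) = ε + signBit x tie := by
  rcases zmod_two_eq_zero_or_one ε with rfl | rfl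
  · simp only [uzpow_zero, one_smul, zero_add]
  simp only [uzpow_one, Units.neg_smul, one_smul]
  rcases lt_trichotomy x 0 with hx | rfl | hx
  · rw [signBit_of_pos (neg_pos.2 hx), signBit_of_neg hx, CharTwo.add_self_eq_zero]
  · rw [neg_zero, signBit_zero, signBit_zero]
  · rw [signBit_of_neg (neg_neg_iff_pos.2 hx), signBit_of_pos hx, add_zero]

end SignFlip

section Cochain

variable {α : Type*} {r : ℕ}

/-- The cup product `δs₀ ⌣ ⋯ ⌣ δsᵣ₋₁` of the coboundaries of the mod 2 vertex functions `s i`,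
evaluated at the ordered simplex with vertices `σ`. -/
def cupCoboundary (s : Fin r → α → ZMod 2) (σ : Fin (r + 1) → α) : ZMod 2 :=
  ∏ i, (s i (σ i.castSucc) + s i (σ i.succ))

lemma cupCoboundary_cons (h : α → ZMod 2) (s : Fin r → α → ZMod 2) (x : α)
    (σ : Fin (r + 1) → α) :
    cupCoboundary (Fin.cons h s : Fin (r + 1) → α → ZMod 2) (Fin.cons x σ : Fin (r + 2) → α) =
      (h x + h (σ 0)) * cupCoboundary s σ := by
  simp only [cupCoboundary, Fin.prod_univ_succ, Fin.castSucc_zero, Fin.cons_zero, Fin.cons_succ,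
    ← Fin.succ_castSucc]

lemma removeNth_zero_cons (x : α) (σ : Fin r → α) :
    (0 : Fin (r + 1)).removeNth (Fin.cons x σ : Fin (r + 1) → α) = σ := by
  rw [Fin.removeNth_zero, Fin.tail_cons]

lemma removeNth_succ_cons (x : α) (σ : Fin (r + 1) → α) (i : Fin (r + 1)) :
    i.succ.removeNth (Fin.cons x σ : Fin (r + 2) → α) = Fin.cons x (i.removeNth σ) := by
  funext j
  cases j using Fin.cases <;> simp [Fin.removeNth]

lemma sum_cupCoboundary_removeNth (s : Fin r → α → ZMod 2) (σ : Fin (r + 2) → α) :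
    ∑ i : Fin (r + 2), cupCoboundary s (i.removeNth σ) = 0 := by
  induction r with
  | zero => simp [cupCoboundary, CharTwo.two_eq_zero]
  | succ r ih =>
    cases σ using Fin.consCases with | _ x σ
    cases σ using Fin.consCases with | _ y σ
    cases s using Fin.consCases with | _ h s
    have hface := ih s (Fin.cons y σ)
    rw [Fin.sum_univ_succ] at hface
    simp only [Fin.sum_univ_succ, removeNth_zero_cons, removeNth_succ_cons, cupCoboundary_cons,
      Fin.cons_zero, ← mul_sum] at hface ⊢
    rw [CharTwo.add_eq_zero] at hface
    rw [← hface]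
    linear_combination cupCoboundary s σ *
      (CharTwo.add_self_eq_zero (h x) + CharTwo.add_self_eq_zero (h y) +
        CharTwo.add_self_eq_zero (h (σ 0)))

lemma sum_mul_cupCoboundary_removeNth (h : α → ZMod 2) (s : Fin r → α → ZMod 2)
    (σ : Fin (r + 2) → α) :
    ∑ i : Fin (r + 2), h (i.removeNth σ 0) * cupCoboundary s (i.removeNth σ) =
      cupCoboundary (Fin.cons h s : Fin (r + 1) → α → ZMod 2) σ := by
  cases σ using Fin.consCases with | _ x σ
  have hsum := sum_cupCoboundary_removeNth s (Fin.cons x σ)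
  rw [Fin.sum_univ_succ] at hsum
  simp only [Fin.sum_univ_succ, removeNth_zero_cons, removeNth_succ_cons, cupCoboundary_cons,
    Fin.cons_zero, ← mul_sum] at hsum ⊢
  rw [CharTwo.add_eq_zero] at hsum
  rw [← hsum]
  ring

lemma ne_of_cupCoboundary_ne_zero {s : Fin r → α → ZMod 2} {σ : Fin (r + 1) → α}
    (h : cupCoboundary s σ ≠ 0) (i : Fin r) : σ i.castSucc ≠ σ i.succ := by
  intro heq
  refine h (prod_eq_zero (mem_univ i) ?_)
  rw [heq, CharTwo.add_self_eq_zero]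

end Cochain

section Grid

/-- One step in the grid `ℤ` away from the origin: `b` is `a` itself or a neighbour of `a` that is
farther from `0`. -/
def Outward (a b : ℤ) : Prop := b = a ∨ (0 ≤ a ∧ b = a + 1) ∨ (a ≤ 0 ∧ b = a - 1)

variable {ι β : Type*} [Fintype ι] [DecidableEq ι] [Fintype β] [DecidableEq β]

/-- The integer points of the product over the blocks `b : β` of the boundaries of the cubes
`[-m, m] ^ {k | blk k = b}`. -/
noncomputable def gridVertices (blk : ι → β) (m : ℕ) : Finset (ι → ℤ) :=
  {v ∈ Fintype.piFinset fun _ => Icc (-(m : ℤ)) m | ∀ b, ∃ k, blk k = b ∧ (v k).natAbs = m}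

lemma mem_gridVertices {blk : ι → β} {m : ℕ} {v : ι → ℤ} :
    v ∈ gridVertices blk m ↔
      (∀ k, (v k).natAbs ≤ m) ∧ ∀ b, ∃ k, blk k = b ∧ (v k).natAbs = m := by
  simp only [gridVertices, mem_filter, Fintype.mem_piFinset, mem_Icc]
  exact and_congr_left' (forall_congr' fun k => by lia)

/-- The vertices of the grid subdivision of the product of cube boundaries. -/
abbrev GridVertex (blk : ι → β) (m : ℕ) : Type _ := gridVertices blk m

variable {blk : ι → β} {m n r : ℕ} {χ : ι → β → ZMod 2} {J : Finset ι}

lemma GridVertex.natAbs_le (v : GridVertex blk m) (k : ι) : (v.1 k).natAbs ≤ m :=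
  (mem_gridVertices.1 v.2).1 k

lemma GridVertex.exists_natAbs_eq (v : GridVertex blk m) (b : β) :
    ∃ k, blk k = b ∧ (v.1 k).natAbs = m :=
  (mem_gridVertices.1 v.2).2 b

/-- The action of `signFlip` on grid vertices. -/
def GridVertex.flip (χ : ι → β → ZMod 2) (g : β → ZMod 2) (v : GridVertex blk m) :
    GridVertex blk m :=
  ⟨signFlip χ g v.1, by
    rw [mem_gridVertices]
    simpa only [natAbs_signFlip] using mem_gridVertices.1 v.2⟩

lemma GridVertex.flip_zero (v : GridVertex blk m) : v.flip χ 0 = v :=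
  Subtype.ext (signFlip_zero χ v.1)

lemma GridVertex.flip_add (g h : β → ZMod 2) (v : GridVertex blk m) :
    v.flip χ (g + h) = (v.flip χ h).flip χ g :=
  Subtype.ext (signFlip_add χ g h v.1)

lemma GridVertex.flip_involutive (g : β → ZMod 2) :
    Function.Involutive (GridVertex.flip χ g : GridVertex blk m → GridVertex blk m) := fun v => by
  rw [← flip_add, zmod_two_pi_add_self, flip_zero]

/-- The face relation on grid vertices: every coordinate of `y` is obtained from that of `x` by an
outward step. -/
def GridVertex.Below (x y : GridVertex blk m) : Prop := ∀ k, Outward (x.1 k) (y.1 k)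

/-- The coordinates of `v` outside `J` vanish. -/
def GridVertex.SupportedOn (J : Finset ι) (v : GridVertex blk m) : Prop := ∀ k ∉ J, v.1 k = 0

lemma outward_sign_smul_iff (ε : ZMod 2) (a b : ℤ) :
    Outward ((-1 : ℤˣ) ^ ε • a) ((-1 : ℤˣ) ^ ε • b) ↔ Outward a b := by
  rcases zmod_two_eq_zero_or_one ε with rfl | rfl
  · simp only [uzpow_zero, one_smul]
  · simp only [uzpow_one, Units.neg_smul, one_smul, Outward]
    lia

lemma GridVertex.flip_below_flip_iff (g : β → ZMod 2) (x y : GridVertex blk m) :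
    (x.flip χ g).Below (y.flip χ g) ↔ x.Below y :=
  forall_congr' fun _ => outward_sign_smul_iff _ _ _

lemma GridVertex.flip_supportedOn_iff (g : β → ZMod 2) (v : GridVertex blk m) :
    (v.flip χ g).SupportedOn J ↔ v.SupportedOn J := by
  simp only [SupportedOn, flip, signFlip, smul_eq_zero_iff_eq]

/-- The ordered simplices of the triangulation of the product of cube boundaries by the face
relation, restricted to the coordinate subspace of `J`. The vertices go inward. -/
def IsGridChain (J : Finset ι) (σ : Fin n → GridVertex blk m) : Prop :=
  (∀ i, (σ i).SupportedOn J) ∧ ∀ i j, i < j → (σ j).Below (σ i)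

lemma isGridChain_flip_iff (g : β → ZMod 2) (σ : Fin n → GridVertex blk m) :
    IsGridChain J (fun i => (σ i).flip χ g) ↔ IsGridChain J σ := by
  simp only [IsGridChain, GridVertex.flip_below_flip_iff, GridVertex.flip_supportedOn_iff]

lemma IsGridChain.below {σ : Fin n → GridVertex blk m} (hσ : IsGridChain J σ) {i j : Fin n}
    (hij : i ≤ j) : (σ j).Below (σ i) := by
  rcases hij.lt_or_eq with hlt | rfl
  · exact hσ.2 i j hlt
  · exact fun _ => Or.inl rfl

lemma isGridChain_insertNth_iff (p : Fin (n + 1)) (x : GridVertex blk m)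
    (τ : Fin n → GridVertex blk m) :
    IsGridChain J (p.insertNth x τ : Fin (n + 1) → GridVertex blk m) ↔
      IsGridChain J τ ∧ x.SupportedOn J ∧ (∀ j : Fin n, j.castSucc < p → x.Below (τ j)) ∧
        ∀ j : Fin n, p ≤ j.castSucc → (τ j).Below x := by
  unfold IsGridChain
  rw [Fin.forall_iff_succAbove p, Fin.forall_iff_succAbove (P := fun i => ∀ j, i < j → _) p]
  simp only [Fin.forall_iff_succAbove (p := p), Fin.insertNth_apply_same,
    Fin.insertNth_apply_succAbove, lt_irrefl, false_imp_iff, true_and,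
    Fin.lt_succAbove_iff_le_castSucc, Fin.succAbove_lt_iff_castSucc_lt,
    Fin.succAbove_lt_succAbove_iff, forall_and]
  tauto

lemma isGridChain_cons_iff (x : GridVertex blk m) (τ : Fin n → GridVertex blk m) :
    IsGridChain J (Fin.cons x τ : Fin (n + 1) → GridVertex blk m) ↔
      IsGridChain J τ ∧ x.SupportedOn J ∧ ∀ j, (τ j).Below x := by
  simpa [Fin.insertNth_zero'] using isGridChain_insertNth_iff (J := J) 0 x τ

end Grid

section Parity

lemma iverson_forall_exists_natAbs_eq {ι β : Type*} [Fintype ι] [Fintype β] (blk : ι → β)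
    (m : ℕ) (v : ι → ℤ) :
    iverson (∀ b, ∃ k, blk k = b ∧ (v k).natAbs = m) =
      ∑ T : Finset β, ∏ k, iverson (blk k ∈ T → (v k).natAbs ≠ m) := by
  simp only [iverson_forall, iverson_exists, prod_one_add, powerset_univ]
  refine sum_congr rfl fun T _ => ?_
  simp only [← iverson_forall]
  rw [← iverson_forall_mem]
  congr 1
  grind

variable {ι β : Type*} [Fintype ι] [DecidableEq ι] [Fintype β] [DecidableEq β]
  {blk : ι → β} {m r : ℕ} {J : Finset ι}

/-- Inclusion–exclusion over the blocks turns the count of grid vertices subject to coordinatewise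
conditions into products of counts of integers. -/
lemma sum_iverson_forall_gridVertex (P : ι → ℤ → Prop) :
    ∑ x : GridVertex blk m, iverson (∀ k, P k (x.1 k)) =
      ∑ T : Finset β, ∏ k, ∑ j ∈ Icc (-(m : ℤ)) m,
        iverson (P k j ∧ (blk k ∈ T → j.natAbs ≠ m)) := by
  calc ∑ x : GridVertex blk m, iverson (∀ k, P k (x.1 k))
      = ∑ v ∈ gridVertices blk m, iverson (∀ k, P k (v k)) :=
        sum_coe_sort (gridVertices blk m) fun v => iverson (∀ k, P k (v k))
    _ = ∑ v ∈ Fintype.piFinset fun _ => Icc (-(m : ℤ)) m,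
          iverson (∀ k, P k (v k)) * iverson (∀ b, ∃ k, blk k = b ∧ (v k).natAbs = m) := by
        rw [gridVertices, sum_filter]
        refine sum_congr rfl fun v _ => ?_
        split_ifs with hv
        · rw [iverson_of_true hv, mul_one]
        · rw [iverson_of_false hv, mul_zero]
    _ = _ := by
        simp only [iverson_forall_exists_natAbs_eq, prod_univ_sum, mul_sum]
        rw [sum_comm]
        refine sum_congr rfl fun T _ => sum_congr rfl fun v _ => ?_
        rw [iverson_forall, ← prod_mul_distrib]
        simp only [iverson_and]

/-- The coordinate `k` takes the same value at `lo` and `hi`, and this value can be moved both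
inward and outward within the cube without changing its sign. -/
def InteriorCoord (lo hi : GridVertex blk m) (k : ι) : Prop :=
  lo.1 k = hi.1 k ∧ lo.1 k ≠ 0 ∧ (lo.1 k).natAbs < m

lemma sum_iverson_outward_both (hm : 0 < m) {a c : ℤ} {p : Prop} (hac : Outward a c)
    (hc : c.natAbs ≤ m) (hp : p → c = 0) :
    ∑ j ∈ Icc (-(m : ℤ)) m, iverson ((p → j = 0) ∧ Outward a j ∧ Outward c j) =
      iverson ¬(a = c ∧ a ≠ 0 ∧ a.natAbs < m) := by
  unfold Outward at *
  by_cases hint : a = c ∧ a ≠ 0 ∧ a.natAbs < m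
  · rw [iverson_of_false (not_not.2 hint),
      sum_iverson_eq_card (t := {a, if 0 < a then a + 1 else a - 1}) (by grind),
      card_pair (by grind)]
    rfl
  rw [iverson_of_true hint]
  by_cases hzero : a = 0 ∧ c = 0 ∧ ¬p
  · rw [sum_iverson_eq_card (t := {-1, 0, 1}) (by grind)]
    rfl
  · rw [sum_iverson_eq_card (t := {c}) (by grind)]
    rfl

lemma sum_iverson_inward_both (hm : 0 < m) {a c : ℤ} {p : Prop} (hac : Outward a c)
    (hc : c.natAbs ≤ m) (hp : p → c = 0) :
    ∑ j ∈ Icc (-(m : ℤ)) m,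
        iverson (((p → j = 0) ∧ Outward j a ∧ Outward j c) ∧ j.natAbs ≠ m) =
      iverson ¬(a = c ∧ a ≠ 0 ∧ a.natAbs < m) := by
  unfold Outward at *
  by_cases hint : a = c ∧ a ≠ 0 ∧ a.natAbs < m
  · rw [iverson_of_false (not_not.2 hint),
      sum_iverson_eq_card (t := {a, if 0 < a then a - 1 else a + 1}) (by grind),
      card_pair (by grind)]
    rfl
  rw [iverson_of_true hint]
  by_cases hext : a.natAbs = m
  · rw [sum_iverson_eq_card (t := {if 0 < a then a - 1 else a + 1}) (by grind)]
    rfl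
  · rw [sum_iverson_eq_card (t := {a}) (by grind)]
    rfl

end Parity

section ParityOfExtensions

lemma Outward.of_outward_outward {a x c d : ℤ} (hax : Outward a x) (hxc : Outward x c)
    (hcd : Outward c d) (had : Outward a d) : Outward x d := by
  unfold Outward at *
  omega

lemma Outward.outward_of_between {d a x c : ℤ} (hda : Outward d a) (hax : Outward a x)
    (hxc : Outward x c) (hdc : Outward d c) : Outward d x := by
  unfold Outward at *
  omega

variable {ι β : Type*} [Fintype ι] [DecidableEq ι] [Fintype β] [DecidableEq β]
  {blk : ι → β} {m r : ℕ} {J : Finset ι}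

lemma sum_iverson_above_eq_prod (hm : 0 < m) {lo hi : GridVertex blk m} (hle : lo.Below hi)
    (hhi : hi.SupportedOn J) :
    ∑ x : GridVertex blk m, iverson (x.SupportedOn J ∧ lo.Below x ∧ hi.Below x) =
      ∏ k, iverson (¬InteriorCoord lo hi k) := by
  simp only [GridVertex.SupportedOn, GridVertex.Below, ← forall_and]
  rw [sum_iverson_forall_gridVertex
    fun k j => (k ∉ J → j = 0) ∧ Outward (lo.1 k) j ∧ Outward (hi.1 k) j]
  rw [Fintype.sum_eq_single ∅]
  · refine prod_congr rfl fun k _ => ?_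
    simp only [notMem_empty, false_imp_iff, and_true]
    exact sum_iverson_outward_both hm (hle k) (hi.natAbs_le k) (hhi k)
  · intro T hT
    obtain ⟨b, hb⟩ := nonempty_iff_ne_empty.2 hT
    obtain ⟨k, rfl, hk⟩ := lo.exists_natAbs_eq b
    refine prod_eq_zero (mem_univ k) (sum_eq_zero fun j hj => iverson_of_false ?_)
    unfold Outward
    grind

lemma sum_iverson_below_eq_prod (hm : 0 < m) {lo hi : GridVertex blk m} (hle : lo.Below hi)
    (hhi : hi.SupportedOn J) :
    ∑ x : GridVertex blk m, iverson (x.SupportedOn J ∧ x.Below lo ∧ x.Below hi) =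
      ∏ k, iverson (¬InteriorCoord lo hi k) := by
  simp only [GridVertex.SupportedOn, GridVertex.Below, ← forall_and]
  rw [sum_iverson_forall_gridVertex
    fun k j => (k ∉ J → j = 0) ∧ Outward j (lo.1 k) ∧ Outward j (hi.1 k)]
  rw [Fintype.sum_eq_single univ]
  · refine prod_congr rfl fun k _ => ?_
    simp only [mem_univ, true_imp_iff]
    exact sum_iverson_inward_both hm (hle k) (hi.natAbs_le k) (hhi k)
  · intro T hT
    obtain ⟨b, hb⟩ : ∃ b, b ∉ T := by simpa [eq_univ_iff_forall] using hT
    obtain ⟨k, rfl, hk⟩ := lo.exists_natAbs_eq b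
    have hle := hle k
    have hhi := hhi k
    have hbound := hi.natAbs_le k
    refine prod_eq_zero (mem_univ k) ?_
    unfold Outward at *
    rw [sum_iverson_eq_card
      (t := {lo.1 k, if 0 < lo.1 k then lo.1 k - 1 else lo.1 k + 1}) (by grind),
      card_pair (by grind)]
    rfl

lemma IsGridChain.sum_iverson_insertNth_zero_add_last (hm : 0 < m)
    {τ : Fin (r + 1) → GridVertex blk m} (hτ : IsGridChain J τ) :
    ∑ x, iverson (IsGridChain J ((0 : Fin (r + 2)).insertNth x τ : Fin (r + 2) → _)) +
      ∑ x, iverson (IsGridChain J ((Fin.last (r + 1)).insertNth x τ : Fin (r + 2) → _)) = 0 := by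
  have hle := hτ.below (Fin.zero_le (Fin.last r))
  have habove (x : GridVertex blk m) :
      (∀ j, (τ j).Below x) ↔ (τ (Fin.last r)).Below x ∧ (τ 0).Below x := by
    refine ⟨fun h => ⟨h _, h _⟩, fun ⟨hlo, hhi⟩ j k => ?_⟩
    grind [Outward, hlo k, hhi k, hτ.below (Fin.le_last j) k, hτ.below (Fin.zero_le j) k]
  have hbelow (x : GridVertex blk m) :
      (∀ j, x.Below (τ j)) ↔ x.Below (τ (Fin.last r)) ∧ x.Below (τ 0) := by
    refine ⟨fun h => ⟨h _, h _⟩, fun ⟨hlo, hhi⟩ j k => ?_⟩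
    grind [Outward, hlo k, hhi k, hτ.below (Fin.le_last j) k, hτ.below (Fin.zero_le j) k]
  simp only [isGridChain_insertNth_iff, hτ, true_and, Fin.not_lt_zero, false_imp_iff,
    implies_true, Fin.zero_le, true_imp_iff, Fin.castSucc_lt_last, Fin.last_le_iff,
    Fin.castSucc_ne_last, and_true, habove, hbelow]
  rw [sum_iverson_above_eq_prod hm hle (hτ.1 0), sum_iverson_below_eq_prod hm hle (hτ.1 0),
    CharTwo.add_self_eq_zero]

lemma sum_iverson_between_eq_zero {lo hi : GridVertex blk m} (hle : lo.Below hi)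
    (hne : lo ≠ hi) (hhi : hi.SupportedOn J) :
    ∑ x : GridVertex blk m, iverson (x.SupportedOn J ∧ lo.Below x ∧ x.Below hi) = 0 := by
  simp only [GridVertex.SupportedOn, GridVertex.Below, ← forall_and]
  rw [sum_iverson_forall_gridVertex
    fun k j => (k ∉ J → j = 0) ∧ Outward (lo.1 k) j ∧ Outward j (hi.1 k)]
  refine sum_eq_zero fun T _ => ?_
  rcases T.eq_empty_or_nonempty with rfl | ⟨b, hb⟩
  · obtain ⟨k, hk⟩ := Function.ne_iff.1 (Subtype.coe_injective.ne hne)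
    have hle := hle k
    have hhi := hhi k
    have hbound := hi.natAbs_le k
    refine prod_eq_zero (mem_univ k) ?_
    simp only [notMem_empty, false_imp_iff, and_true]
    unfold Outward at *
    rw [sum_iverson_eq_card (t := {lo.1 k, hi.1 k}) (by grind), card_pair hk]
    rfl
  · obtain ⟨k, rfl, hk⟩ := lo.exists_natAbs_eq b
    refine prod_eq_zero (mem_univ k) (sum_eq_zero fun j _ => iverson_of_false ?_)
    grind [Outward, hi.natAbs_le k]

lemma IsGridChain.sum_iverson_insertNth_between {τ : Fin (r + 1) → GridVertex blk m}
    (hτ : IsGridChain J τ) (i : Fin r) (hi : τ i.castSucc ≠ τ i.succ) :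
    ∑ x, iverson (IsGridChain J (i.succ.castSucc.insertNth x τ : Fin (r + 2) → _)) = 0 := by
  have hle := hτ.2 _ _ i.castSucc_lt_succ
  have hbetween (x : GridVertex blk m) :
      ((∀ j : Fin (r + 1), j.castSucc < i.succ.castSucc → x.Below (τ j)) ∧
          ∀ j : Fin (r + 1), i.succ.castSucc ≤ j.castSucc → (τ j).Below x) ↔
        (τ i.succ).Below x ∧ x.Below (τ i.castSucc) := by
    simp only [Fin.castSucc_lt_castSucc_iff, Fin.castSucc_le_castSucc_iff]
    refine ⟨fun h => ⟨h.2 _ le_rfl, h.1 _ i.castSucc_lt_succ⟩, fun ⟨hlo, hhi⟩ => ⟨?_, ?_⟩⟩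
    · intro j hj k
      exact (hlo k).of_outward_outward (hhi k) (hτ.below (Fin.le_castSucc_iff.2 hj) k)
        (hτ.2 _ _ hj k)
    · intro j hj k
      exact (hτ.below hj k).outward_of_between (hlo k) (hhi k)
        (hτ.below (i.castSucc_lt_succ.le.trans hj) k)
  simp only [isGridChain_insertNth_iff, hτ, true_and, hbetween]
  exact sum_iverson_between_eq_zero hle hi.symm (hτ.1 _)

lemma sum_iverson_isGridChain_insertNth_eq_zero (hm : 0 < m)
    {τ : Fin (r + 1) → GridVertex blk m} (hne : ∀ i : Fin r, τ i.castSucc ≠ τ i.succ) :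
    ∑ p : Fin (r + 2), ∑ x, iverson (IsGridChain J (p.insertNth x τ : Fin (r + 2) → _)) = 0 := by
  by_cases hτ : IsGridChain J τ
  · rw [Fin.sum_univ_castSucc, Fin.sum_univ_succ,
      sum_eq_zero fun i _ => hτ.sum_iverson_insertNth_between i (hne i), add_zero]
    exact hτ.sum_iverson_insertNth_zero_add_last hm
  · simp only [isGridChain_insertNth_iff, hτ, false_and, iverson_of_false not_false,
      sum_const_zero]

end ParityOfExtensions

section OrbitCount

variable {ι β : Type*} [Fintype ι] [DecidableEq ι] [Fintype β] [DecidableEq β]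
  {blk : ι → β} {m r : ℕ} {χ : ι → β → ZMod 2} {κ : GridVertex blk m → β → ZMod 2}
  {J : Finset ι}

/-- A gauge picks the vertex with `κ v = 0` in each orbit of the free action `GridVertex.flip`;
in general `κ v` is the group element carrying that vertex to `v`. -/
def IsGauge (χ : ι → β → ZMod 2) (κ : GridVertex blk m → β → ZMod 2) : Prop :=
  ∀ g v, κ (v.flip χ g) = g + κ v

/-- The vertex function `s` changes under flips by the character `ψ`. -/
def HasCharacter (χ : ι → β → ZMod 2) (ψ : β → ZMod 2) (s : GridVertex blk m → ZMod 2) : Prop :=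
  ∀ g v, s (v.flip χ g) = ψ ⬝ᵥ g + s v

/-- The cup product of the coboundaries of `s`, summed over the orbits of the `r`-simplices in the
coordinate subspace of `J`: each orbit is represented by its simplex with innermost vertex in
`κ = 0`. -/
noncomputable def orbitCount (κ : GridVertex blk m → β → ZMod 2) (J : Finset ι)
    (s : Fin r → GridVertex blk m → ZMod 2) : ZMod 2 :=
  ∑ σ : Fin (r + 1) → GridVertex blk m,
    iverson (κ (σ (Fin.last r)) = 0) * (iverson (IsGridChain J σ) * cupCoboundary s σ)

lemma cupCoboundary_flip {s : Fin r → GridVertex blk m → ZMod 2} {ψ : Fin r → β → ZMod 2}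
    (hs : ∀ i, HasCharacter χ (ψ i) (s i)) (g : β → ZMod 2)
    (σ : Fin (r + 1) → GridVertex blk m) :
    cupCoboundary s (fun i => (σ i).flip χ g) = cupCoboundary s σ := by
  refine prod_congr rfl fun i _ => ?_
  rw [hs i, hs i]
  linear_combination CharTwo.add_self_eq_zero (ψ i ⬝ᵥ g)

lemma IsGauge.sum_iverson_mul_eq (hκ : IsGauge χ κ) {n : ℕ}
    {u : (Fin n → GridVertex blk m) → ZMod 2}
    (hu : ∀ g σ, u (fun i => (σ i).flip χ g) = u σ) (i j : Fin n) :
    ∑ σ, iverson (κ (σ i) = 0) * u σ = ∑ σ, iverson (κ (σ j) = 0) * u σ := by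
  have hsplit (i j : Fin n) : ∑ σ, iverson (κ (σ i) = 0) * u σ =
      ∑ g, ∑ σ, iverson (κ (σ i) = 0 ∧ κ (σ j) = g) * u σ := by
    rw [sum_comm]
    refine sum_congr rfl fun σ _ => ?_
    simp only [iverson_and, ← sum_mul, ← mul_sum]
    rw [sum_iverson_eq_card (t := {κ (σ j)}) (by simp [eq_comm]), card_singleton, Nat.cast_one,
      mul_one]
  rw [hsplit i j, hsplit j i]
  refine sum_congr rfl fun g _ => ?_
  have hbij : Function.Bijective fun (σ : Fin n → GridVertex blk m) i => (σ i).flip χ g :=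
    Function.Involutive.bijective fun σ => funext fun i => GridVertex.flip_involutive g (σ i)
  refine (Fintype.sum_bijective _ hbij _ _ fun σ => ?_).symm
  have hg (a : β → ZMod 2) : g + a = 0 ↔ a = g := by
    rw [← zmod_two_pi_add_self g, add_right_inj]
  rw [hu, hκ, hκ, hg, add_eq_left, and_comm]

lemma sum_fin_succ_arrow_eq_sum_insertNth {α : Type*} [Fintype α] {n : ℕ} (p : Fin (n + 1))
    (f : (Fin (n + 1) → α) → ZMod 2) :
    ∑ σ, f σ = ∑ τ : Fin n → α, ∑ x, f (p.insertNth x τ) := by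
  rw [← (Fin.insertNthEquiv (fun _ => α) p).sum_comp, Fintype.sum_prod_type, sum_comm]
  rfl

/-- By the Leibniz rule the cup product is the coboundary of a flip-invariant cochain, and every
simplex has an even number of cofaces. -/
lemma orbitCount_cons_eq_zero (hm : 0 < m) (hκ : IsGauge χ κ) {h : GridVertex blk m → ZMod 2}
    (hh : HasCharacter χ 0 h) {s : Fin r → GridVertex blk m → ZMod 2}
    {ψ : Fin r → β → ZMod 2} (hs : ∀ i, HasCharacter χ (ψ i) (s i)) :
    orbitCount κ J (Fin.cons h s : Fin (r + 1) → _) = 0 := by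
  have hface (p : Fin (r + 2)) :
      ∑ σ : Fin (r + 2) → GridVertex blk m, iverson (κ (σ (Fin.last (r + 1))) = 0) *
          (iverson (IsGridChain J σ) * (h (p.removeNth σ 0) * cupCoboundary s (p.removeNth σ))) =
        ∑ τ : Fin (r + 1) → GridVertex blk m,
          iverson (κ (τ (Fin.last r)) = 0) * h (τ 0) * cupCoboundary s τ *
            ∑ x, iverson (IsGridChain J (p.insertNth x τ : Fin (r + 2) → _)) := by
    rw [hκ.sum_iverson_mul_eq _ (Fin.last (r + 1)) (p.succAbove (Fin.last r)),
      sum_fin_succ_arrow_eq_sum_insertNth p]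
    · simp only [Fin.insertNth_apply_succAbove, Fin.removeNth_insertNth, mul_sum]
      exact sum_congr rfl fun τ _ => sum_congr rfl fun x _ => by ring
    · intro g σ
      have hremove : p.removeNth (fun i => (σ i).flip χ g) =
          fun i => (p.removeNth σ i).flip χ g := rfl
      rw [hremove, isGridChain_flip_iff, cupCoboundary_flip hs, hh, zero_dotProduct, zero_add]
  simp only [orbitCount, ← sum_mul_cupCoboundary_removeNth, mul_sum]
  rw [sum_comm, sum_congr rfl fun p _ => hface p, sum_comm]
  refine sum_eq_zero fun τ _ => ?_
  rw [← mul_sum]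
  by_cases hcup : cupCoboundary s τ = 0
  · rw [hcup, mul_zero, zero_mul]
  · rw [sum_iverson_isGridChain_insertNth_eq_zero hm (ne_of_cupCoboundary_ne_zero hcup), mul_zero]

lemma orbitCount_cons (h : GridVertex blk m → ZMod 2) (s : Fin r → GridVertex blk m → ZMod 2) :
    orbitCount κ J (Fin.cons h s : Fin (r + 1) → _) =
      ∑ τ : Fin (r + 1) → GridVertex blk m, iverson (κ (τ (Fin.last r)) = 0) *
        ((∑ x, iverson (IsGridChain J (Fin.cons x τ : Fin (r + 2) → _)) * (h x + h (τ 0))) *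
          cupCoboundary s τ) := by
  rw [orbitCount, sum_fin_succ_arrow_eq_sum_insertNth 0]
  simp only [Fin.insertNth_zero', cupCoboundary_cons, ← Fin.succ_last, Fin.cons_succ, sum_mul,
    mul_sum, mul_assoc]

lemma orbitCount_cons_add (s : Fin r → GridVertex blk m → ZMod 2)
    (h h' : GridVertex blk m → ZMod 2) :
    orbitCount κ J (Fin.cons (h + h') s : Fin (r + 1) → _) =
      orbitCount κ J (Fin.cons h s : Fin (r + 1) → _) +
        orbitCount κ J (Fin.cons h' s : Fin (r + 1) → _) := by
  simp only [orbitCount_cons, ← sum_add_distrib, ← mul_add, ← add_mul, Pi.add_apply]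
  simp only [add_add_add_comm]

lemma orbitCount_cons_sum (s : Fin r → GridVertex blk m → ZMod 2) (K : Finset ι)
    (h : ι → GridVertex blk m → ZMod 2) :
    orbitCount κ J (Fin.cons (∑ k ∈ K, h k) s : Fin (r + 1) → _) =
      ∑ k ∈ K, orbitCount κ J (Fin.cons (h k) s : Fin (r + 1) → _) :=
  map_sum (AddMonoidHom.mk' (fun h => orbitCount κ J (Fin.cons h s : Fin (r + 1) → _))
    (orbitCount_cons_add s)) h K

end OrbitCount

section CoordSign

variable {ι β : Type*} [Fintype ι] [DecidableEq ι] [Fintype β] [DecidableEq β]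
  {blk : ι → β} {m r : ℕ} {χ : ι → β → ZMod 2} {κ : GridVertex blk m → β → ZMod 2}
  {J : Finset ι}

/-- The sign of the coordinate `k`; where it vanishes the tie is broken by the gauge, so that the
result still has the character `χ k`. -/
noncomputable def coordSign (χ : ι → β → ZMod 2) (κ : GridVertex blk m → β → ZMod 2) (k : ι)
    (v : GridVertex blk m) : ZMod 2 :=
  signBit (v.1 k) (χ k ⬝ᵥ κ v)

lemma IsGauge.hasCharacter_coordSign (hκ : IsGauge χ κ) (k : ι) :
    HasCharacter χ (χ k) (coordSign χ κ k) := fun g v => by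
  rw [coordSign, hκ, dotProduct_add]
  exact signBit_sign_smul _ _ _

lemma coordSign_eq_of_below {x y : GridVertex blk m} (hxy : x.Below y) {k : ι}
    (hk : x.1 k ≠ 0) : coordSign χ κ k y = coordSign χ κ k x := by
  have hout := hxy k
  unfold Outward at hout
  rcases lt_or_gt_of_ne hk with hneg | hpos
  · rw [coordSign, coordSign, signBit_of_neg hneg, signBit_of_neg (by omega)]
  · rw [coordSign, coordSign, signBit_of_pos hpos, signBit_of_pos (by omega)]

lemma IsGridChain.le_card_changing {τ : Fin (r + 1) → GridVertex blk m} (hτ : IsGridChain J τ)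
    (hne : ∀ i : Fin r, τ i.castSucc ≠ τ i.succ) :
    r ≤ #{k | (τ (Fin.last r)).1 k ≠ (τ 0).1 k} := by
  have hchange (i : Fin r) : ∃ k, (τ i.castSucc).1 k ≠ (τ i.succ).1 k :=
    Function.ne_iff.1 (Subtype.coe_injective.ne (hne i))
  choose k hk using hchange
  have hinj : Function.Injective k := by
    intro i j heq
    by_contra hij
    wlog hlt : i < j generalizing i j
    · exact this heq.symm (Ne.symm hij) (lt_of_le_of_ne (not_lt.1 hlt) (Ne.symm hij))
    have hi := hk i
    have hj := hk j
    rw [← heq] at hj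
    have h01 := hτ.below i.castSucc_lt_succ.le (k i)
    have h02 := hτ.below (Fin.castSucc_le_castSucc_iff.2 hlt.le) (k i)
    have h03 := hτ.below (i.castSucc_lt_succ.le.trans (Fin.succ_le_succ_iff.2 hlt.le)) (k i)
    have h23 := hτ.below j.castSucc_lt_succ.le (k i)
    have h12 := hτ.below (Fin.succ_le_castSucc_iff.2 hlt) (k i)
    unfold Outward at *
    omega
  have hmaps (i : Fin r) : (τ (Fin.last r)).1 (k i) ≠ (τ 0).1 (k i) := by
    have hi := hk i
    have h1 := hτ.below (Fin.zero_le i.castSucc) (k i)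
    have h2 := hτ.below i.castSucc_lt_succ.le (k i)
    have h3 := hτ.below (Fin.le_last i.succ) (k i)
    unfold Outward at *
    omega
  simpa using card_le_card_of_injOn k (s := univ) (by simpa [Set.MapsTo] using hmaps)
    hinj.injOn

lemma GridVertex.card_le_card_extreme (v : GridVertex blk m) :
    Fintype.card β ≤ #{k | (v.1 k).natAbs = m} :=
  card_le_card_of_surjOn blk fun b _ => by
    obtain ⟨k, hb, hk⟩ := v.exists_natAbs_eq b
    exact ⟨k, by simpa using hk, hb⟩

lemma IsGridChain.changing_union_extreme_eq_erase (hm : 0 < m)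
    {τ : Fin (r + 1) → GridVertex blk m} (hτ : IsGridChain J τ)
    (hne : ∀ i : Fin r, τ i.castSucc ≠ τ i.succ) (hJ : #J = r + 1 + Fintype.card β) {k : ι}
    (hkJ : k ∈ J) (hk : (τ 0).1 k = 0) :
    ({l | (τ (Fin.last r)).1 l ≠ (τ 0).1 l} : Finset ι) ∪
      ({l | ((τ (Fin.last r)).1 l).natAbs = m} : Finset ι) = J.erase k := by
  have hout := hτ.below (Fin.zero_le (Fin.last r))
  have hlo := hτ.1 (Fin.last r)
  have hhi := hτ.1 0
  refine eq_of_subset_of_card_le (fun l hl => ?_) ?_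
  · have hkout := hout k
    unfold Outward at hkout
    grind [GridVertex.SupportedOn]
  · have hdisj : Disjoint ({l | (τ (Fin.last r)).1 l ≠ (τ 0).1 l} : Finset ι)
        ({l | ((τ (Fin.last r)).1 l).natAbs = m} : Finset ι) := by
      refine disjoint_filter.2 fun l _ hchange hextreme => ?_
      have := hout l
      have := (τ 0).natAbs_le l
      unfold Outward at *
      omega
    have hchanging := hτ.le_card_changing hne
    have hextreme := (τ (Fin.last r)).card_le_card_extreme
    rw [card_union_of_disjoint hdisj, card_erase_of_mem hkJ]
    omega

lemma IsGridChain.eq_update_of_forall_below (hm : 0 < m) {τ : Fin (r + 1) → GridVertex blk m}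
    (hτ : IsGridChain J τ) (hne : ∀ i : Fin r, τ i.castSucc ≠ τ i.succ)
    (hJ : #J = r + 1 + Fintype.card β) {k : ι} (hkJ : k ∈ J) (hk : (τ 0).1 k = 0)
    {x : GridVertex blk m} (hxJ : x.SupportedOn J) (hx : ∀ j, (τ j).Below x) :
    x.1 = Function.update (τ 0).1 k (x.1 k) := by
  refine Function.eq_update_iff.2 ⟨rfl, fun l hl => ?_⟩
  have hcover := hτ.changing_union_extreme_eq_erase hm hne hJ hkJ hk
  by_cases hlJ : l ∈ J
  · have hmem : l ∈ J.erase k := mem_erase.2 ⟨hl, hlJ⟩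
    rw [← hcover, mem_union, mem_filter_univ, mem_filter_univ] at hmem
    have := hτ.below (Fin.zero_le (Fin.last r)) l
    have := hx 0 l
    have := hx (Fin.last r) l
    have := x.natAbs_le l
    have := (τ 0).natAbs_le l
    unfold Outward at *
    omega
  · rw [hxJ l hlJ, hτ.1 0 l hlJ]

lemma isGridChain_erase_iff {τ : Fin (r + 1) → GridVertex blk m} {k : ι} :
    IsGridChain (J.erase k) τ ↔ IsGridChain J τ ∧ (τ 0).1 k = 0 := by
  constructor
  · intro hτ
    exact ⟨⟨fun i l hl => hτ.1 i l (mt mem_of_mem_erase hl), hτ.2⟩,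
      hτ.1 0 k (notMem_erase k J)⟩
  · rintro ⟨hτ, hk⟩
    refine ⟨fun i l hl => ?_, hτ.2⟩
    by_cases hlJ : l ∈ J
    · obtain rfl : l = k := by simpa [hlJ] using hl
      have := hτ.below (Fin.zero_le i) l
      unfold Outward at this
      omega
    · exact hτ.1 i l hlJ

lemma GridVertex.exists_eq_update (hm : 0 < m) (v : GridVertex blk m) {k : ι} (hk : v.1 k = 0)
    {e : ℤ} (he : e.natAbs = 1) : ∃ x : GridVertex blk m, x.1 = Function.update v.1 k e := by
  refine ⟨⟨Function.update v.1 k e, mem_gridVertices.2 ⟨fun l => ?_, fun b => ?_⟩⟩, rfl⟩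
  · have := v.natAbs_le l
    rcases eq_or_ne l k with rfl | hl
    · rw [Function.update_self]
      omega
    · rwa [Function.update_of_ne hl]
  · obtain ⟨l, hlb, hlm⟩ := v.exists_natAbs_eq b
    have hl : l ≠ k := by
      rintro rfl
      omega
    exact ⟨l, hlb, by rwa [Function.update_of_ne hl]⟩

lemma IsGridChain.supportedOn_of_eq_update {τ : Fin (r + 1) → GridVertex blk m}
    (hτ : IsGridChain J τ) {k : ι} (hkJ : k ∈ J) {e : ℤ} {y : GridVertex blk m}
    (hy : y.1 = Function.update (τ 0).1 k e) : y.SupportedOn J := fun l hl => by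
  rw [hy, Function.update_of_ne (ne_of_mem_of_not_mem hkJ hl).symm, hτ.1 0 l hl]

lemma IsGridChain.forall_below_of_eq_update {τ : Fin (r + 1) → GridVertex blk m}
    (hτ : IsGridChain J τ) {k : ι} (hk : (τ 0).1 k = 0) {e : ℤ} (he : e.natAbs = 1)
    {y : GridVertex blk m} (hy : y.1 = Function.update (τ 0).1 k e) (j : Fin (r + 1)) :
    (τ j).Below y := fun l => by
  have hout := hτ.below (Fin.zero_le j) l
  rcases eq_or_ne l k with rfl | hl
  · rw [hy, Function.update_self]
    unfold Outward at *
    omega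
  · rwa [hy, Function.update_of_ne hl]

/-- In top dimension the vertices that can be put in front of a simplex in the hyperplane where the
coordinate `k` vanishes are its first vertex and the two neighbours of the latter in direction `k`;
exactly one of the three changes the sign. -/
lemma IsGridChain.sum_iverson_cons_mul_coordSign_eq_one (hm : 0 < m)
    {τ : Fin (r + 1) → GridVertex blk m} (hτ : IsGridChain J τ)
    (hne : ∀ i : Fin r, τ i.castSucc ≠ τ i.succ) (hJ : #J = r + 1 + Fintype.card β) {k : ι}
    (hkJ : k ∈ J) (hk : (τ 0).1 k = 0) :
    ∑ x, iverson (IsGridChain J (Fin.cons x τ : Fin (r + 2) → _)) *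
        (coordSign χ κ k x + coordSign χ κ k (τ 0)) = 1 := by
  obtain ⟨e, he, hsign⟩ : ∃ e : ℤ, e.natAbs = 1 ∧
      ∀ t, signBit e t + coordSign χ κ k (τ 0) = 1 ∧
        signBit (-e) t + coordSign χ κ k (τ 0) = 0 := by
    rcases zmod_two_eq_zero_or_one (coordSign χ κ k (τ 0)) with h | h
    · exact ⟨-1, rfl, fun t => by rw [h]; exact ⟨rfl, rfl⟩⟩
    · exact ⟨1, rfl, fun t => by rw [h]; exact ⟨rfl, rfl⟩⟩
  obtain ⟨y, hy⟩ := (τ 0).exists_eq_update hm hk he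
  rw [Fintype.sum_eq_single y]
  · have hchain : IsGridChain J (Fin.cons y τ : Fin (r + 2) → _) :=
      (isGridChain_cons_iff y τ).2 ⟨hτ, hτ.supportedOn_of_eq_update hkJ hy,
        hτ.forall_below_of_eq_update hk he hy⟩
    rw [iverson_of_true hchain, one_mul, coordSign, hy, Function.update_self]
    exact (hsign _).1
  · intro x hxy
    by_cases hx : IsGridChain J (Fin.cons x τ : Fin (r + 2) → _)
    swap
    · rw [iverson_of_false hx, zero_mul]
    obtain ⟨-, hxJ, hbelow⟩ := (isGridChain_cons_iff x τ).1 hx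
    have hupdate := hτ.eq_update_of_forall_below hm hne hJ hkJ hk hxJ hbelow
    have hxk : x.1 k = 0 ∨ x.1 k = -e := by
      have hxe : x.1 k ≠ e := fun hxe => hxy (Subtype.ext (by rw [hupdate, hxe, hy]))
      have hout := hbelow 0 k
      unfold Outward at hout
      omega
    rcases hxk with hxk | hxk
    · obtain rfl : x = τ 0 :=
        Subtype.ext (by rw [hupdate, hxk, ← hk, Function.update_eq_self])
      rw [CharTwo.add_self_eq_zero, mul_zero]
    · rw [coordSign, hxk, (hsign _).2, mul_zero]

lemma sum_iverson_isGridChain_cons_mul_coordSign (hm : 0 < m)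
    {τ : Fin (r + 1) → GridVertex blk m} (hne : ∀ i : Fin r, τ i.castSucc ≠ τ i.succ)
    (hJ : #J = r + 1 + Fintype.card β) {k : ι} (hkJ : k ∈ J) :
    ∑ x, iverson (IsGridChain J (Fin.cons x τ : Fin (r + 2) → _)) *
        (coordSign χ κ k x + coordSign χ κ k (τ 0)) = iverson (IsGridChain (J.erase k) τ) := by
  by_cases hface : IsGridChain (J.erase k) τ
  · obtain ⟨hτ, hk⟩ := isGridChain_erase_iff.1 hface
    rw [iverson_of_true hface, hτ.sum_iverson_cons_mul_coordSign_eq_one hm hne hJ hkJ hk]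
  · rw [iverson_of_false hface]
    refine sum_eq_zero fun x _ => ?_
    by_cases hx : IsGridChain J (Fin.cons x τ : Fin (r + 2) → _)
    · obtain ⟨hτ, -, hbelow⟩ := (isGridChain_cons_iff x τ).1 hx
      have hk : (τ 0).1 k ≠ 0 := fun hk => hface (isGridChain_erase_iff.2 ⟨hτ, hk⟩)
      rw [coordSign_eq_of_below (hbelow 0) hk, CharTwo.add_self_eq_zero, mul_zero]
    · rw [iverson_of_false hx, zero_mul]

lemma orbitCount_cons_coordSign (hm : 0 < m) (s : Fin r → GridVertex blk m → ZMod 2)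
    (hJ : #J = r + 1 + Fintype.card β) {k : ι} (hkJ : k ∈ J) :
    orbitCount κ J (Fin.cons (coordSign χ κ k) s : Fin (r + 1) → _) =
      orbitCount κ (J.erase k) s := by
  rw [orbitCount_cons, orbitCount]
  refine sum_congr rfl fun τ _ => ?_
  by_cases hcup : cupCoboundary s τ = 0
  · simp only [hcup, mul_zero]
  · rw [sum_iverson_isGridChain_cons_mul_coordSign hm (ne_of_cupCoboundary_ne_zero hcup) hJ hkJ]

end CoordSign

section Degree

lemma exists_equivariant_of_free {G X : Type*} [AddGroup G] [AddAction G X]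
    (hfree : ∀ (g : G) (x : X), g +ᵥ x = x → g = 0) :
    ∃ κ : X → G, ∀ g x, κ (g +ᵥ x) = g + κ x := by
  let rep (x : X) : X := (Quotient.mk (AddAction.orbitRel G X) x).out
  have hrep (g : G) (x : X) : rep (g +ᵥ x) = rep x :=
    congrArg Quotient.out (Quotient.sound (AddAction.mem_orbit x g))
  have hcarry (x : X) : ∃ g : G, g +ᵥ rep x = x :=
    AddAction.orbitRel_apply.1 (Setoid.symm' _ (Quotient.mk_out (s := AddAction.orbitRel G X) x))
  choose κ hκ using hcarry
  refine ⟨κ, fun g x => ?_⟩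
  have hsame : κ (g +ᵥ x) +ᵥ rep x = (g + κ x) +ᵥ rep x := by
    rw [← hrep g, hκ, hrep, add_vadd, hκ]
  refine (neg_add_eq_zero.1 (hfree (-(g + κ x) + κ (g +ᵥ x)) (rep x) ?_)).symm
  rw [add_vadd, hsame, neg_vadd_vadd]

variable {ι β : Type*} [Fintype β] {blk : ι → β} {χ : ι → β → ZMod 2}

/-- The characters of any choice of one coordinate from each block form a basis. -/
def IsTransversal (blk : ι → β) (χ : ι → β → ZMod 2) : Prop :=
  ∀ p : β → ι, (∀ b, blk (p b) = b) → Function.Bijective fun g b => χ (p b) ⬝ᵥ g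

variable [Fintype ι] [DecidableEq ι] [DecidableEq β] {m r : ℕ} {J : Finset ι}

lemma IsTransversal.eq_zero_of_flip_eq (hχ : IsTransversal blk χ) (hm : 0 < m)
    {g : β → ZMod 2} {v : GridVertex blk m} (hg : v.flip χ g = v) : g = 0 := by
  choose p hblk hp using v.exists_natAbs_eq
  refine (hχ p hblk).injective (funext fun b => ?_)
  have hsign : (-1 : ℤˣ) ^ (χ (p b) ⬝ᵥ g) • v.1 (p b) = v.1 (p b) :=
    congrFun (congrArg Subtype.val hg) (p b)
  have hpb := hp b
  rcases zmod_two_eq_zero_or_one (χ (p b) ⬝ᵥ g) with h | h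
  · simpa using h
  · rw [h, uzpow_one, Units.neg_smul, one_smul] at hsign
    omega

lemma IsTransversal.exists_isGauge (hχ : IsTransversal blk χ) (hm : 0 < m) :
    ∃ κ : GridVertex blk m → β → ZMod 2, IsGauge χ κ :=
  let _ : AddAction (β → ZMod 2) (GridVertex blk m) :=
    { vadd := GridVertex.flip χ
      zero_vadd := GridVertex.flip_zero
      add_vadd := GridVertex.flip_add }
  exists_equivariant_of_free fun _ _ => hχ.eq_zero_of_flip_eq hm

/-- The mod 2 number of orbits of common zeros of generic functions with characters `ψ i` on the
product of cube boundaries in the coordinate subspace of `J`, as counted by `orbitCount`, is `d`. -/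
def HasDegree (blk : ι → β) (χ : ι → β → ZMod 2) (J : Finset ι) (ψ : Fin r → β → ZMod 2)
    (d : ZMod 2) : Prop :=
  ∀ ⦃m : ℕ⦄, 0 < m → ∀ ⦃κ : GridVertex blk m → β → ZMod 2⦄, IsGauge χ κ →
    ∀ ⦃s : Fin r → GridVertex blk m → ZMod 2⦄, (∀ i, HasCharacter χ (ψ i) (s i)) →
      orbitCount κ J s = d

lemma hasDegree_zero_of_forall_blk_ne {b : β} (hb : ∀ k ∈ J, blk k ≠ b)
    (ψ : Fin r → β → ZMod 2) : HasDegree blk χ J ψ 0 := by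
  intro m hm κ _ s _
  refine sum_eq_zero fun σ _ => ?_
  rw [iverson_of_false (p := IsGridChain J σ), zero_mul, mul_zero]
  intro hσ
  obtain ⟨k, hkb, hkm⟩ := (σ 0).exists_natAbs_eq b
  have hk := hσ.1 0 k fun hkJ => hb k hkJ hkb
  omega

/-- The first function may be replaced by a product of the coordinates `k ∈ K`. -/
lemma HasDegree.cons_sum {ψ : Fin r → β → ZMod 2} {K : Finset ι} {d : ι → ZMod 2}
    (hJ : #J = r + 1 + Fintype.card β) (hK : K ⊆ J)
    (hd : ∀ k ∈ K, HasDegree blk χ (J.erase k) ψ (d k)) :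
    HasDegree blk χ J (Fin.cons (∑ k ∈ K, χ k) ψ : Fin (r + 1) → _) (∑ k ∈ K, d k) := by
  intro m hm κ hκ s hs
  cases s using Fin.consCases with | _ h s
  have hh : HasCharacter χ (∑ k ∈ K, χ k) h := hs 0
  have hs' (i : Fin r) : HasCharacter χ (ψ i) (s i) := hs i.succ
  have hinvariant : HasCharacter χ 0 (h + ∑ k ∈ K, coordSign χ κ k) := fun g v => by
    simp only [Pi.add_apply, Finset.sum_apply, hh g v, hκ.hasCharacter_coordSign _ g v,
      sum_add_distrib, sum_dotProduct, zero_dotProduct]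
    linear_combination CharTwo.add_self_eq_zero (∑ k ∈ K, χ k ⬝ᵥ g)
  have hzero := orbitCount_cons_eq_zero (J := J) hm hκ hinvariant hs'
  rw [orbitCount_cons_add, orbitCount_cons_sum, CharTwo.add_eq_zero] at hzero
  rw [hzero]
  refine sum_congr rfl fun k hk => ?_
  rw [orbitCount_cons_coordSign hm s hJ (hK hk), hd k hk hm hκ hs']

lemma IsTransversal.exists_flip_eq (hχ : IsTransversal blk χ) {p : β → ι}
    (hp : ∀ b, blk (p b) = b) (hJ : ∀ k, k ∈ J ↔ k = p (blk k)) (hm : 0 < m)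
    {v w : GridVertex blk m} (hv : v.SupportedOn J) (hw : w.SupportedOn J) :
    ∃ g, w.flip χ g = v := by
  have hextreme (u : GridVertex blk m) (hu : u.SupportedOn J) (b : β) :
      (u.1 (p b)).natAbs = m := by
    obtain ⟨k, rfl, hkm⟩ := u.exists_natAbs_eq b
    have hkJ : k ∈ J := by
      by_contra hkJ
      have := hu k hkJ
      omega
    rwa [← (hJ k).1 hkJ]
  obtain ⟨g, hg⟩ := (hχ p hp).surjective fun b => if w.1 (p b) = v.1 (p b) then 0 else 1
  refine ⟨g, Subtype.ext (funext fun k => ?_)⟩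
  change (-1 : ℤˣ) ^ (χ k ⬝ᵥ g) • w.1 k = v.1 k
  by_cases hk : k ∈ J
  · have hgk : χ (p (blk k)) ⬝ᵥ g = _ := congrFun hg (blk k)
    have hvk := hextreme v hv (blk k)
    have hwk := hextreme w hw (blk k)
    rw [← (hJ k).1 hk] at hgk hvk hwk
    rw [hgk]
    split_ifs with heq
    · rw [uzpow_zero, one_smul, heq]
    · rw [uzpow_one, Units.neg_smul, one_smul]
      omega
  · rw [hv k hk, hw k hk, smul_zero]

lemma exists_supportedOn {p : β → ι} (hp : ∀ b, blk (p b) = b)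
    (hJ : ∀ k, k ∈ J ↔ k = p (blk k)) (m : ℕ) : ∃ v : GridVertex blk m, v.SupportedOn J := by
  refine ⟨⟨fun k => if k ∈ J then m else 0, mem_gridVertices.2 ⟨fun k => ?_, fun b => ?_⟩⟩,
    fun k hk => if_neg hk⟩
  · split_ifs <;> omega
  · refine ⟨p b, hp b, ?_⟩
    rw [if_pos ((hJ (p b)).2 (by rw [hp])), Int.natAbs_natCast]

lemma IsTransversal.hasDegree_one (hχ : IsTransversal blk χ) {p : β → ι}
    (hp : ∀ b, blk (p b) = b) (hJ : ∀ k, k ∈ J ↔ k = p (blk k)) (ψ : Fin 0 → β → ZMod 2) :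
    HasDegree blk χ J ψ 1 := by
  intro m hm κ hκ s _
  obtain ⟨v, hv⟩ := exists_supportedOn hp hJ m
  have hbase (σ : Fin 1 → GridVertex blk m) :
      κ (σ (Fin.last 0)) = 0 ∧ IsGridChain J σ ↔ σ = fun _ => v.flip χ (κ v) := by
    constructor
    · rintro ⟨hκσ, hσ⟩
      obtain ⟨g, hg⟩ := hχ.exists_flip_eq hp hJ hm (hσ.1 (Fin.last 0)) hv
      rw [← hg, hκ, ← zmod_two_pi_add_self (κ v), add_left_inj] at hκσ
      rw [← hκσ, hg]
      exact funext fun i => congrArg σ (Subsingleton.elim i _)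
    · rintro rfl
      refine ⟨by rw [hκ, zmod_two_pi_add_self], fun _ => ?_, fun i j hij => ?_⟩
      · exact (GridVertex.flip_supportedOn_iff _ v).2 hv
      · exact absurd hij (Subsingleton.elim i j ▸ lt_irrefl i)
  simp only [orbitCount, cupCoboundary, Fin.prod_univ_zero, mul_one, ← iverson_and, hbase]
  rw [sum_iverson_eq_card (t := {fun _ => v.flip χ (κ v)}) (by simp), card_singleton,
    Nat.cast_one]

end Degree

section BorsukUlam

lemma exists_forall_eq_zero_of_sign_changes {E : Type*} [PseudoMetricSpace E] {S : Set E}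
    (hS : IsCompact S) {r : ℕ} {Φ : Fin r → E → ℝ} (hΦ : ∀ i, Continuous (Φ i))
    (hsimplex : ∀ M : ℕ, ∃ σ : Fin (r + 1) → E, (∀ i, σ i ∈ S) ∧
      (∀ i, dist (σ i) (σ 0) ≤ 1 / ((M : ℝ) + 1)) ∧
        ∀ i : Fin r, Φ i (σ i.castSucc) * Φ i (σ i.succ) ≤ 0) :
    ∃ x ∈ S, ∀ i, Φ i x = 0 := by
  choose σ hmem hdist hsign using hsimplex
  obtain ⟨x, hx, φ, hφ, hlim⟩ := hS.tendsto_subseq fun M => hmem M 0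
  have hvertex (i : Fin (r + 1)) :
      Filter.Tendsto (fun M => σ (φ M) i) Filter.atTop (nhds x) := by
    have hsqueeze : Filter.Tendsto (fun M => dist (σ (φ M) 0) (σ (φ M) i)) Filter.atTop
        (nhds 0) :=
      squeeze_zero (fun _ => dist_nonneg) (fun M => dist_comm (σ (φ M) i) _ ▸ hdist (φ M) i)
        ((tendsto_one_div_add_atTop_nhds_zero_nat (𝕜 := ℝ)).comp hφ.tendsto_atTop)
    exact (tendsto_iff_of_dist hsqueeze).1 hlim
  refine ⟨x, hx, fun i => mul_self_eq_zero.1 (le_antisymm ?_ (mul_self_nonneg _))⟩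
  exact le_of_tendsto' ((((hΦ i).tendsto x).comp (hvertex i.castSucc)).mul
    (((hΦ i).tendsto x).comp (hvertex i.succ))) fun M => hsign (φ M) i

lemma mul_nonpos_of_signBit_ne {x y : ℝ} {t u : ZMod 2} (h : signBit x t ≠ signBit y u) :
    x * y ≤ 0 := by
  by_contra! hxy
  rcases mul_pos_iff.1 hxy with ⟨hx, hy⟩ | ⟨hx, hy⟩
  · exact h (by rw [signBit_of_pos hx, signBit_of_pos hy])
  · exact h (by rw [signBit_of_neg hx, signBit_of_neg hy])

variable {ι β : Type*}

/-- The product over the blocks `b : β` of the boundaries of the cubes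
`[-1, 1] ^ {k | blk k = b}`. -/
def cubeBoundaryProd (blk : ι → β) : Set (ι → ℝ) :=
  {x | (∀ k, |x k| ≤ 1) ∧ ∀ b, ∃ k, blk k = b ∧ |x k| = 1}

lemma isCompact_cubeBoundaryProd [Finite ι] (blk : ι → β) : IsCompact (cubeBoundaryProd blk) := by
  have hcube : IsCompact (Set.pi Set.univ fun _ : ι => Set.Icc (-1 : ℝ) 1) :=
    isCompact_univ_pi fun _ => isCompact_Icc
  refine hcube.of_isClosed_subset ?_ fun x hx k _ => abs_le.1 (hx.1 k)
  have hclosed : cubeBoundaryProd blk =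
      (⋂ k, {x | |x k| ≤ 1}) ∩ ⋂ b, ⋃ k : {k // blk k = b}, {x | |x k| = 1} := by
    ext x
    simp [cubeBoundaryProd]
  rw [hclosed]
  exact (isClosed_iInter fun k => isClosed_le (by fun_prop) (by fun_prop)).inter
    (isClosed_iInter fun b => isClosed_iUnion_of_finite fun k =>
      isClosed_eq (by fun_prop) (by fun_prop))

/-- `Φ` is multiplied by the values of the character `ψ` under sign flips. -/
def IsSignEquivariant [Fintype β] (χ : ι → β → ZMod 2) (ψ : β → ZMod 2)
    (Φ : (ι → ℝ) → ℝ) : Prop :=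
  ∀ g x, Φ (signFlip χ g x) = (-1 : ℤˣ) ^ (ψ ⬝ᵥ g) • Φ x

variable [Fintype ι] [DecidableEq ι] [Fintype β] [DecidableEq β] {blk : ι → β} {m r : ℕ}
  {χ : ι → β → ZMod 2}

/-- The grid vertex `v` rescaled to a point of `cubeBoundaryProd blk`. -/
noncomputable def GridVertex.toReal (v : GridVertex blk m) : ι → ℝ := fun k => v.1 k / m

lemma GridVertex.toReal_flip (g : β → ZMod 2) (v : GridVertex blk m) :
    (v.flip χ g).toReal = signFlip χ g v.toReal := by
  funext k
  simp only [toReal, flip, signFlip]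
  rcases zmod_two_eq_zero_or_one (χ k ⬝ᵥ g) with h | h <;> simp [h, neg_div]

lemma GridVertex.abs_toReal (v : GridVertex blk m) (k : ι) :
    |v.toReal k| = (v.1 k).natAbs / m := by
  rw [toReal, abs_div, Nat.abs_cast, Nat.cast_natAbs, Int.cast_abs]

lemma GridVertex.toReal_mem (hm : 0 < m) (v : GridVertex blk m) :
    v.toReal ∈ cubeBoundaryProd blk := by
  refine ⟨fun k => ?_, fun b => ?_⟩
  · rw [abs_toReal]
    exact div_le_one_of_le₀ (Nat.cast_le.2 (v.natAbs_le k)) m.cast_nonneg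
  · obtain ⟨k, hkb, hkm⟩ := v.exists_natAbs_eq b
    exact ⟨k, hkb, by rw [abs_toReal, hkm, div_self (Nat.cast_ne_zero.2 hm.ne')]⟩

lemma GridVertex.Below.dist_toReal_le {x y : GridVertex blk m} (hxy : x.Below y) :
    dist x.toReal y.toReal ≤ 1 / m := by
  refine (dist_pi_le_iff (by positivity)).2 fun k => ?_
  have hstep : |x.1 k - y.1 k| ≤ 1 := by
    have := hxy k
    unfold Outward at this
    rw [abs_le]
    omega
  rw [Real.dist_eq, toReal, toReal, ← sub_div, abs_div, Nat.abs_cast]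
  gcongr
  exact_mod_cast hstep

lemma IsSignEquivariant.hasCharacter {κ : GridVertex blk m → β → ZMod 2} (hκ : IsGauge χ κ)
    {ψ : β → ZMod 2} {Φ : (ι → ℝ) → ℝ} (hΦ : IsSignEquivariant χ ψ Φ) :
    HasCharacter χ ψ fun v => signBit (Φ v.toReal) (ψ ⬝ᵥ κ v) := fun g v => by
  beta_reduce
  rw [GridVertex.toReal_flip, hΦ, hκ, dotProduct_add]
  exact signBit_sign_smul _ _ _

lemma HasDegree.exists_sign_changes (hχ : IsTransversal blk χ) {ψ : Fin r → β → ZMod 2}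
    {d : ZMod 2} (hdeg : HasDegree blk χ univ ψ d) (hd : d ≠ 0) {Φ : Fin r → (ι → ℝ) → ℝ}
    (hΦ : ∀ i, IsSignEquivariant χ (ψ i) (Φ i)) (hm : 0 < m) :
    ∃ σ : Fin (r + 1) → ι → ℝ, (∀ i, σ i ∈ cubeBoundaryProd blk) ∧
      (∀ i, dist (σ i) (σ 0) ≤ 1 / m) ∧
        ∀ i : Fin r, Φ i (σ i.castSucc) * Φ i (σ i.succ) ≤ 0 := by
  obtain ⟨κ, hκ⟩ := hχ.exists_isGauge hm
  rw [← hdeg hm hκ fun i => (hΦ i).hasCharacter hκ] at hd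
  obtain ⟨σ, -, hσ⟩ := exists_ne_zero_of_sum_ne_zero hd
  have hchain : IsGridChain univ σ := by
    by_contra hchain
    rw [iverson_of_false hchain, zero_mul, mul_zero] at hσ
    exact hσ rfl
  have hcup := prod_ne_zero_iff.1 (right_ne_zero_of_mul (right_ne_zero_of_mul hσ))
  exact ⟨fun i => (σ i).toReal, fun i => (σ i).toReal_mem hm,
    fun i => (hchain.below (Fin.zero_le i)).dist_toReal_le,
    fun i => mul_nonpos_of_signBit_ne (mt CharTwo.add_eq_zero.2 (hcup i (mem_univ i)))⟩

theorem HasDegree.exists_forall_eq_zero (hχ : IsTransversal blk χ) {ψ : Fin r → β → ZMod 2}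
    {d : ZMod 2} (hdeg : HasDegree blk χ univ ψ d) (hd : d ≠ 0) {Φ : Fin r → (ι → ℝ) → ℝ}
    (hcont : ∀ i, Continuous (Φ i)) (hΦ : ∀ i, IsSignEquivariant χ (ψ i) (Φ i)) :
    ∃ x ∈ cubeBoundaryProd blk, ∀ i, Φ i x = 0 := by
  refine exists_forall_eq_zero_of_sign_changes (isCompact_cubeBoundaryProd blk) hcont fun M => ?_
  simpa using hdeg.exists_sign_changes hχ hd hΦ M.succ_pos

end BorsukUlam

section DivLinear

variable {a b : ZMod 2} {v w : ℕ → ℕ → ZMod 2}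

/-- The coefficients of `V / (1 + a X + b Y)`, where `V` is the power series with coefficients
`v i j` at `X ^ i * Y ^ j` for `0 < i, j`. Values of `v` with `i = 0` or `j = 0` are disregarded. -/
def divLinear (a b : ZMod 2) (v : ℕ → ℕ → ZMod 2) : ℕ → ℕ → ZMod 2
  | 0, _ => 0
  | _ + 1, 0 => 0
  | i + 1, j + 1 =>
    v (i + 1) (j + 1) + a * divLinear a b v i (j + 1) + b * divLinear a b v (i + 1) j

lemma divLinear_zero_left (j : ℕ) : divLinear a b v 0 j = 0 := by rw [divLinear]

lemma divLinear_zero_right (i : ℕ) : divLinear a b v i 0 = 0 := by cases i <;> rw [divLinear]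

lemma divLinear_succ_succ (i j : ℕ) :
    divLinear a b v (i + 1) (j + 1) =
      v (i + 1) (j + 1) + a * divLinear a b v i (j + 1) + b * divLinear a b v (i + 1) j := by
  rw [divLinear]

lemma divLinear_eq_of_recurrence (hleft : ∀ j, w 0 j = 0) (hright : ∀ i, w i 0 = 0)
    (hsucc : ∀ i j, w (i + 1) (j + 1) = v (i + 1) (j + 1) + a * w i (j + 1) + b * w (i + 1) j) :
    divLinear a b v = w := by
  funext i j
  induction i, j using divLinear.induct with
  | case1 j => rw [divLinear_zero_left, hleft]
  | case2 i => rw [divLinear_zero_right, hright]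
  | case3 i j ihleft ihright => rw [divLinear_succ_succ, hsucc, ihleft, ihright]

lemma divLinear_eq_add (i j : ℕ) :
    divLinear a b v i j = divLinear a b (divLinear a b v) i j +
      a * divLinear a b (divLinear a b v) (i - 1) j +
      b * divLinear a b (divLinear a b v) i (j - 1) := by
  rcases i with - | i
  · simp only [zero_tsub, divLinear_zero_left, mul_zero, add_zero]
  rcases j with - | j
  · simp only [zero_tsub, divLinear_zero_right, mul_zero, add_zero]
  rw [divLinear_succ_succ (v := divLinear a b v), Nat.add_sub_cancel, Nat.add_sub_cancel]
  linear_combination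
    -CharTwo.add_self_eq_zero (a * divLinear a b (divLinear a b v) i (j + 1)) -
      CharTwo.add_self_eq_zero (b * divLinear a b (divLinear a b v) (i + 1) j)

/-- This is `(1 + a X + b Y) ^ 2 = 1 + a X ^ 2 + b Y ^ 2`. -/
lemma divLinear_divLinear_succ_succ (i j : ℕ) :
    divLinear a b (divLinear a b v) (i + 1) (j + 1) =
      v (i + 1) (j + 1) + a * divLinear a b (divLinear a b v) (i - 1) (j + 1) +
        b * divLinear a b (divLinear a b v) (i + 1) (j - 1) := by
  have hsq (c : ZMod 2) : c * c = c := by revert c; decide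
  rw [divLinear_succ_succ, divLinear_succ_succ, divLinear_eq_add i, divLinear_eq_add (i + 1),
    Nat.add_sub_cancel, Nat.add_sub_cancel]
  set u := divLinear a b (divLinear a b v)
  linear_combination u (i - 1) (j + 1) * hsq a + u (i + 1) (j - 1) * hsq b +
    CharTwo.add_self_eq_zero (a * u i (j + 1)) + CharTwo.add_self_eq_zero (b * u (i + 1) j) +
    CharTwo.add_self_eq_zero (a * b * u i j)

/-- The coefficients at odd exponents. Truncated subtraction makes `(0, j)` and `(i, 0)` refer to
the coefficients of `v` there. -/
def oddPart (v : ℕ → ℕ → ZMod 2) (i j : ℕ) : ZMod 2 := v (2 * i - 1) (2 * j - 1)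

lemma oddPart_divLinear_divLinear :
    oddPart (divLinear a b (divLinear a b v)) = divLinear a b (oddPart v) := by
  refine (divLinear_eq_of_recurrence (w := oddPart (divLinear a b (divLinear a b v)))
    (fun j => divLinear_zero_left _) (fun i => divLinear_zero_right _) fun i j => ?_).symm
  exact divLinear_divLinear_succ_succ (2 * i) (2 * j)

/-- The coefficients of the monomial `X * Y`. -/
def deltaOneOne (i j : ℕ) : ZMod 2 := if i = 1 ∧ j = 1 then 1 else 0

lemma oddPart_deltaOneOne : oddPart deltaOneOne = deltaOneOne := by
  funext i j
  exact if_congr (by omega) rfl rfl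

lemma divLinear_zero_zero_deltaOneOne : divLinear 0 0 deltaOneOne = deltaOneOne :=
  divLinear_eq_of_recurrence (fun _ => if_neg (by omega)) (fun _ => if_neg (by omega))
    fun i j => by ring

lemma divLinear_zero_one_deltaOneOne (i j : ℕ) (hi : 1 < i) :
    divLinear 0 1 deltaOneOne i j = 0 := by
  have hrow : divLinear 0 1 deltaOneOne = fun i j => if i = 1 ∧ 0 < j then 1 else 0 :=
    divLinear_eq_of_recurrence (fun _ => if_neg (by omega)) (fun _ => if_neg (by omega))
      fun i j => by
        simp only [deltaOneOne]
        grind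
  rw [hrow]
  exact if_neg (by omega)

lemma divLinear_one_one_deltaOneOne (i j : ℕ) :
    divLinear 1 1 deltaOneOne (i + 1) (j + 1) = ((i + j).choose i : ZMod 2) := by
  have hchoose : divLinear 1 1 deltaOneOne =
      fun i j => if 0 < i ∧ 0 < j then ((i - 1 + (j - 1)).choose (i - 1) : ZMod 2) else 0 := by
    refine divLinear_eq_of_recurrence (fun _ => if_neg (by omega)) (fun _ => if_neg (by omega))
      fun i j => ?_
    rcases i with - | i <;> rcases j with - | j
    · simp [deltaOneOne]
    · simp [deltaOneOne]
    · simp [deltaOneOne]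
    · simp [deltaOneOne, ← add_assoc, add_right_comm i 1 j, Nat.choose_succ_succ']
  simp [hchoose]

lemma divLinear_zero_one_divLinear_one_one_deltaOneOne (i j : ℕ) :
    divLinear 0 1 (divLinear 1 1 deltaOneOne) (i + 1) (j + 1) =
      ((i + j + 1).choose j : ZMod 2) := by
  induction j with
  | zero => simp [divLinear_succ_succ (a := 0), divLinear_one_one_deltaOneOne, divLinear_zero_right]
  | succ j ih =>
    rw [divLinear_succ_succ, ih, divLinear_one_one_deltaOneOne, zero_mul, add_zero, one_mul,
      Nat.choose_symm_add, ← Nat.cast_add, add_comm (Nat.choose _ _)]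
    exact congrArg _ (Nat.choose_succ_succ' (i + j + 1) j).symm

end DivLinear

section FrameDegree

lemma erase_inl_disjSum {α β : Type*} [DecidableEq α] [DecidableEq β] (s : Finset α)
    (t : Finset β) (x : α) : (s.disjSum t).erase (.inl x) = (s.erase x).disjSum t := by
  ext (y | y) <;> simp

lemma erase_inr_disjSum {α β : Type*} [DecidableEq α] [DecidableEq β] (s : Finset α)
    (t : Finset β) (x : β) : (s.disjSum t).erase (.inr x) = s.disjSum (t.erase x) := by
  ext (y | y) <;> simp

lemma sum_zmod_two_smul {ι M : Type*} [AddCommMonoid M] [Module (ZMod 2) M] (s : Finset ι)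
    (ε : ι → ZMod 2) (f : ι → M) : ∑ k ∈ s, ε k • f k = ∑ k ∈ s with ε k = 1, f k := by
  rw [sum_filter]
  refine sum_congr rfl fun k _ => ?_
  rcases zmod_two_eq_zero_or_one (ε k) with h | h <;> simp [h]

lemma HasDegree.const_succ {ι β : Type*} [Fintype β] [Fintype ι] [DecidableEq ι] [DecidableEq β]
    {blk : ι → β} {χ : ι → β → ZMod 2} {r : ℕ} {J K : Finset ι} {ψ : β → ZMod 2}
    {ε d : ι → ZMod 2} (hψ : ∑ k ∈ K, ε k • χ k = ψ) (hJ : #J = r + 1 + Fintype.card β)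
    (hK : K ⊆ J) (hd : ∀ k ∈ K, HasDegree blk χ (J.erase k) (fun _ : Fin r => ψ) (d k)) :
    HasDegree blk χ J (fun _ : Fin (r + 1) => ψ) (∑ k ∈ K, ε k * d k) := by
  have hcons : (fun _ : Fin (r + 1) => ψ) = Fin.cons (∑ k ∈ K with ε k = 1, χ k) fun _ => ψ := by
    rw [← sum_zmod_two_smul, hψ]
    exact (Fin.cons_self_tail _).symm
  have hdegree : ∑ k ∈ K, ε k * d k = ∑ k ∈ K with ε k = 1, d k := sum_zmod_two_smul K ε d
  rw [hcons, hdegree]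
  exact HasDegree.cons_sum hJ ((filter_subset _ K).trans hK) fun k hk => hd k (mem_filter.1 hk).1

variable {ζ φ γ : Type*}

/-- The coordinates are split into the coefficients `ζ` and `φ` of two vectors and the entries `γ`
of a Hermitian form on their span. -/
def frameBlock : ζ ⊕ φ ⊕ γ → Fin 3 := Sum.elim (fun _ => 0) (Sum.elim (fun _ => 1) fun _ => 2)

/-- The first two sign changes flip the two vectors and the third one flips the form; `θ c` records
how the entry `c` of the form responds to the first two. -/
def frameCharacter (θ : γ → ZMod 2 × ZMod 2) : ζ ⊕ φ ⊕ γ → Fin 3 → ZMod 2 :=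
  Sum.elim (fun _ => ![1, 0, 0]) (Sum.elim (fun _ => ![0, 1, 0]) fun c => ![(θ c).1, (θ c).2, 1])

lemma isTransversal_frameCharacter (θ : γ → ZMod 2 × ZMod 2) :
    IsTransversal (frameBlock : ζ ⊕ φ ⊕ γ → Fin 3) (frameCharacter θ) := by
  intro p hp
  rw [← Finite.injective_iff_bijective]
  intro g g' hgg'
  obtain ⟨z, hz⟩ : ∃ z, p 0 = .inl z := by
    have := hp 0
    rcases h : p 0 with x | x | x <;> simp_all [frameBlock]
  obtain ⟨f, hf⟩ : ∃ f, p 1 = .inr (.inl f) := by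
    have := hp 1
    rcases h : p 1 with x | x | x <;> simp_all [frameBlock]
  obtain ⟨c, hc⟩ : ∃ c, p 2 = .inr (.inr c) := by
    have := hp 2
    rcases h : p 2 with x | x | x <;> simp_all [frameBlock]
  have h0 : g 0 = g' 0 := by simpa [hz, frameCharacter, vecHead] using congrFun hgg' 0
  have h1 : g 1 = g' 1 := by simpa [hf, frameCharacter, vecHead, vecTail] using congrFun hgg' 1
  have h2 : g 2 = g' 2 := by
    simpa [hc, frameCharacter, vecHead, vecTail, h0, h1] using congrFun hgg' 2
  funext b
  fin_cases b <;> assumption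

variable [Fintype ζ] [Fintype φ] [Fintype γ] [DecidableEq ζ] [DecidableEq φ] [DecidableEq γ]
  {θ : γ → ZMod 2 × ZMod 2} {C : Finset γ} {v : ℕ → ℕ → ZMod 2}

/-- The degree of functions that only respond to the sign change of the form, on the coordinate
subspace with `i` coefficients of the first vector, `j` of the second, and the entries in `C` of the
form, is `v i j`. -/
def HasDegreeTable (ζ φ : Type*) [Fintype ζ] [Fintype φ] [DecidableEq ζ] [DecidableEq φ]
    (θ : γ → ZMod 2 × ZMod 2) (C : Finset γ) (v : ℕ → ℕ → ZMod 2) : Prop :=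
  ∀ (Z : Finset ζ) (F : Finset φ) (r : ℕ), #Z + #F + #C = r + 3 →
    HasDegree frameBlock (frameCharacter θ) (Z.disjSum (F.disjSum C))
      (fun _ : Fin r => ![0, 0, 1]) (v #Z #F)

lemma hasDegree_frame_of_left_empty {r : ℕ} (F : Finset φ) (ψ : Fin r → Fin 3 → ZMod 2) :
    HasDegree frameBlock (frameCharacter θ) ((∅ : Finset ζ).disjSum (F.disjSum C)) ψ 0 :=
  hasDegree_zero_of_forall_blk_ne (b := 0) (by simp [frameBlock]) ψ

lemma hasDegree_frame_of_right_empty {r : ℕ} (Z : Finset ζ) (ψ : Fin r → Fin 3 → ZMod 2) :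
    HasDegree frameBlock (frameCharacter θ) (Z.disjSum ((∅ : Finset φ).disjSum C)) ψ 0 :=
  hasDegree_zero_of_forall_blk_ne (b := 1) (by simp [frameBlock]) ψ

lemma hasDegree_frame_of_form_empty {r : ℕ} (Z : Finset ζ) (F : Finset φ)
    (ψ : Fin r → Fin 3 → ZMod 2) :
    HasDegree frameBlock (frameCharacter θ) (Z.disjSum (F.disjSum ∅)) ψ 0 :=
  hasDegree_zero_of_forall_blk_ne (b := 2) (by simp [frameBlock]) ψ

lemma HasDegreeTable.singleton {c : γ} (hc : θ c = 0) :
    HasDegreeTable ζ φ θ {c} deltaOneOne := by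
  intro Z F r hr
  rw [card_singleton] at hr
  rcases r with - | r
  · rcases Z.eq_empty_or_nonempty with rfl | hZ
    · exact hasDegree_frame_of_left_empty F _
    rcases F.eq_empty_or_nonempty with rfl | hF
    · rw [deltaOneOne, if_neg (by simp)]
      exact hasDegree_frame_of_right_empty Z _
    have hZcard := hZ.card_pos
    have hFcard := hF.card_pos
    obtain ⟨z, rfl⟩ := card_eq_one.1 (show #Z = 1 by omega)
    obtain ⟨f, rfl⟩ := card_eq_one.1 (show #F = 1 by omega)
    refine (isTransversal_frameCharacter θ).hasDegree_one
      (p := ![.inl z, .inr (.inl f), .inr (.inr c)]) (fun b => ?_) (fun k => ?_) _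
    · fin_cases b <;> rfl
    · rcases k with k | k | k <;> simp [frameBlock]
  · have hdelta : deltaOneOne #Z #F =
        ∑ k ∈ {(.inr (.inr c) : ζ ⊕ φ ⊕ γ)}, (1 : ζ ⊕ φ ⊕ γ → ZMod 2) k * 0 := by
      rw [deltaOneOne, if_neg (by omega), sum_eq_zero fun _ _ => mul_zero _]
    rw [hdelta]
    refine HasDegree.const_succ (by simp [frameCharacter, hc]) (by simp; omega) (by simp)
      fun k hk => ?_
    rw [mem_singleton.1 hk, erase_inr_disjSum, erase_inr_disjSum, erase_singleton]
    exact hasDegree_frame_of_form_empty Z F _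

lemma hasDegree_frame_succ {r : ℕ} {Z : Finset ζ} {F : Finset φ} {z : ζ} {f : φ} {c : γ}
    {dz df dc : ZMod 2} (hz : z ∈ Z) (hf : f ∈ F) (hc : c ∈ C) (hcard : #Z + #F + #C = r + 1 + 3)
    (hdz : HasDegree frameBlock (frameCharacter θ) ((Z.erase z).disjSum (F.disjSum C))
      (fun _ : Fin r => ![0, 0, 1]) dz)
    (hdf : HasDegree frameBlock (frameCharacter θ) (Z.disjSum ((F.erase f).disjSum C))
      (fun _ : Fin r => ![0, 0, 1]) df)
    (hdc : HasDegree frameBlock (frameCharacter θ) (Z.disjSum (F.disjSum (C.erase c)))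
      (fun _ : Fin r => ![0, 0, 1]) dc) :
    HasDegree frameBlock (frameCharacter θ) (Z.disjSum (F.disjSum C))
      (fun _ : Fin (r + 1) => ![0, 0, 1]) (dc + (θ c).1 * dz + (θ c).2 * df) := by
  let ε : ζ ⊕ φ ⊕ γ → ZMod 2 := Sum.elim (fun _ => (θ c).1) (Sum.elim (fun _ => (θ c).2) 1)
  let d : ζ ⊕ φ ⊕ γ → ZMod 2 := Sum.elim (fun _ => dz) (Sum.elim (fun _ => df) fun _ => dc)
  have hsum {M : Type} [AddCommMonoid M] (s : ζ ⊕ φ ⊕ γ → M) :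
      ∑ k ∈ {.inr (.inr c), .inl z, .inr (.inl f)}, s k =
        s (.inr (.inr c)) + s (.inl z) + s (.inr (.inl f)) := by
    rw [sum_insert (by simp), sum_pair (by simp), add_assoc]
  have hdegree : dc + (θ c).1 * dz + (θ c).2 * df =
      ∑ k ∈ {.inr (.inr c), .inl z, .inr (.inl f)}, ε k * d k := by
    rw [hsum]
    simp [ε, d]
  rw [hdegree]
  refine HasDegree.const_succ ?_ ?_ ?_ ?_
  · rw [hsum]
    simp [ε, frameCharacter, CharTwo.add_self_eq_zero]
  · simp only [card_disjSum, Fintype.card_fin]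
    omega
  · simp [insert_subset_iff, hz, hf, hc]
  · simp only [forall_mem_insert, forall_eq, mem_singleton, erase_inr_disjSum, erase_inl_disjSum]
    exact ⟨hdc, hdz, hdf⟩

lemma HasDegreeTable.insert_nonempty {c : γ} (hv : HasDegreeTable ζ φ θ C v) (hC : C.Nonempty)
    (hc : c ∉ C) : HasDegreeTable ζ φ θ (insert c C) (divLinear (θ c).1 (θ c).2 v) := by
  intro Z F
  induction hn : #Z + #F using Nat.strong_induction_on generalizing Z F with | _ n ih
  intro r hr
  rcases Z.eq_empty_or_nonempty with rfl | ⟨z, hz⟩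
  · rw [card_empty, divLinear_zero_left]
    exact hasDegree_frame_of_left_empty F _
  rcases F.eq_empty_or_nonempty with rfl | ⟨f, hf⟩
  · rw [card_empty, divLinear_zero_right]
    exact hasDegree_frame_of_right_empty Z _
  have hZ := card_erase_add_one hz
  have hF := card_erase_add_one hf
  have hCcard := hC.card_pos
  have hcCcard := card_insert_of_notMem hc
  obtain ⟨r, rfl⟩ : ∃ r', r = r' + 1 := ⟨r - 1, by omega⟩
  rw [← hZ, ← hF, divLinear_succ_succ]
  refine hasDegree_frame_succ hz hf (mem_insert_self c C) (by omega) ?_ ?_ ?_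
  · rw [hF]
    exact ih _ (by omega) (Z.erase z) F rfl r (by omega)
  · rw [hZ]
    exact ih _ (by omega) Z (F.erase f) rfl r (by omega)
  · rw [hZ, hF, erase_insert hc]
    exact hv Z F r (by omega)

lemma hasDegree_frame_cons_pair {r : ℕ} {ψ : Fin r → Fin 3 → ZMod 2} {Z : Finset ζ}
    {F : Finset φ} {c c' : γ} {d d' : ZMod 2} (hcc' : c ≠ c') (hc : c ∈ C) (hc' : c' ∈ C)
    (hcard : #Z + #F + #C = r + 1 + 3)
    (hd : HasDegree frameBlock (frameCharacter θ) (Z.disjSum (F.disjSum (C.erase c))) ψ d)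
    (hd' : HasDegree frameBlock (frameCharacter θ) (Z.disjSum (F.disjSum (C.erase c'))) ψ d') :
    HasDegree frameBlock (frameCharacter θ) (Z.disjSum (F.disjSum C))
      (Fin.cons ![(θ c + θ c').1, (θ c + θ c').2, 0] ψ : Fin (r + 1) → _) (d + d') := by
  have hne : (.inr (.inr c) : ζ ⊕ φ ⊕ γ) ≠ .inr (.inr c') := by simpa using hcc'
  have hcharacter : ![(θ c + θ c').1, (θ c + θ c').2, 0] =
      ∑ k ∈ ({.inr (.inr c), .inr (.inr c')} : Finset (ζ ⊕ φ ⊕ γ)), frameCharacter θ k := by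
    rw [sum_pair hne]
    simp [frameCharacter, CharTwo.add_self_eq_zero]
  have hdegree : d + d' = ∑ k ∈ ({.inr (.inr c), .inr (.inr c')} : Finset (ζ ⊕ φ ⊕ γ)),
      if k = .inr (.inr c) then d else d' := by
    rw [sum_pair hne, if_pos rfl, if_neg hne.symm]
  rw [hcharacter, hdegree]
  refine HasDegree.cons_sum ?_ ?_ ?_
  · simp only [card_disjSum, Fintype.card_fin]
    omega
  · simp [insert_subset_iff, hc, hc']
  · simp only [forall_mem_insert, forall_eq, mem_singleton, erase_inr_disjSum, if_pos,
      if_neg hne.symm]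
    exact ⟨hd, hd'⟩

/-- The sign responses of the real coordinates of a Hermitian `3 × 3` matrix whose upper right entry
vanishes: three diagonal entries and the real and imaginary parts of the entries `(0, 1)` and
`(1, 2)`, where the first two sign changes flip the first two basis vectors. -/
def formSign : Fin 7 → ZMod 2 × ZMod 2 := ![0, 0, 0, (1, 1), (1, 1), (0, 1), (0, 1)]

lemma hasDegreeTable_formSign_erase_zero_one :
    HasDegreeTable ζ φ formSign ((univ.erase 0).erase 1)
      (divLinear 0 1 (divLinear 0 1 (divLinear 1 1 (divLinear 1 1 deltaOneOne)))) := by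
  rw [show (univ.erase 0).erase 1 = ({6, 5, 4, 3, 2} : Finset (Fin 7)) by decide]
  exact HasDegreeTable.singleton (θ := formSign) (c := 2) rfl
    |>.insert_nonempty (c := 3) (by simp) (by decide)
    |>.insert_nonempty (c := 4) (by simp) (by decide)
    |>.insert_nonempty (c := 5) (by simp) (by decide)
    |>.insert_nonempty (c := 6) (by simp) (by decide)

lemma hasDegreeTable_formSign_erase_zero_three :
    HasDegreeTable ζ φ formSign ((univ.erase 0).erase 3)
      (divLinear 0 1 (divLinear 0 1 (divLinear 1 1 (divLinear 0 0 deltaOneOne)))) := by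
  rw [show (univ.erase 0).erase 3 = ({6, 5, 4, 2, 1} : Finset (Fin 7)) by decide]
  exact HasDegreeTable.singleton (θ := formSign) (c := 1) rfl
    |>.insert_nonempty (c := 2) (by simp) (by decide)
    |>.insert_nonempty (c := 4) (by simp) (by decide)
    |>.insert_nonempty (c := 5) (by simp) (by decide)
    |>.insert_nonempty (c := 6) (by simp) (by decide)

lemma hasDegreeTable_formSign_erase_three_four :
    HasDegreeTable ζ φ formSign ((univ.erase 3).erase 4)
      (divLinear 0 1 (divLinear 0 1 (divLinear 0 0 (divLinear 0 0 deltaOneOne)))) := by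
  rw [show (univ.erase 3).erase 4 = ({6, 5, 2, 1, 0} : Finset (Fin 7)) by decide]
  exact HasDegreeTable.singleton (θ := formSign) (c := 0) rfl
    |>.insert_nonempty (c := 1) (by simp) (by decide)
    |>.insert_nonempty (c := 2) (by simp) (by decide)
    |>.insert_nonempty (c := 5) (by simp) (by decide)
    |>.insert_nonempty (c := 6) (by simp) (by decide)

lemma divLinear_formSign_erase_three_four {a b : ℕ} (ha : 0 < a) :
    divLinear 0 1 (divLinear 0 1 (divLinear 0 0 (divLinear 0 0 deltaOneOne)))
      (2 * a + 1) (2 * b + 1) = 0 := by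
  rw [divLinear_zero_zero_deltaOneOne, divLinear_zero_zero_deltaOneOne]
  change oddPart (divLinear 0 1 (divLinear 0 1 deltaOneOne)) (a + 1) (b + 1) = 0
  rw [oddPart_divLinear_divLinear, oddPart_deltaOneOne,
    divLinear_zero_one_deltaOneOne _ _ (by omega)]

lemma divLinear_formSign_erase_zero_one (a b : ℕ) :
    divLinear 0 1 (divLinear 0 1 (divLinear 1 1 (divLinear 1 1 deltaOneOne)))
      (2 * a + 1) (2 * b + 1) = ((a + b + 1).choose b : ZMod 2) := by
  change oddPart (divLinear 0 1 (divLinear 0 1 (divLinear 1 1 (divLinear 1 1 deltaOneOne))))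
    (a + 1) (b + 1) = _
  rw [oddPart_divLinear_divLinear, oddPart_divLinear_divLinear, oddPart_deltaOneOne,
    divLinear_zero_one_divLinear_one_one_deltaOneOne]

/-- Two functions with character `![1, 1, 0]` are traded for the pairs of entries
`{3, 0}, {4, 0}` or `{3, 0}, {3, 1}`; the two ways of removing `0` and `3` cancel. -/
lemma hasDegree_formSign {a b : ℕ} (ha : 0 < a) (hζ : Fintype.card ζ = 2 * a + 1)
    (hφ : Fintype.card φ = 2 * b + 1) :
    HasDegree frameBlock (frameCharacter formSign) (univ : Finset (ζ ⊕ φ ⊕ Fin 7))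
      (Fin.cons ![1, 1, 0] (Fin.cons ![1, 1, 0] fun _ => ![0, 0, 1] :
        Fin (2 * a + 2 * b + 4 + 1) → _) : Fin (2 * a + 2 * b + 4 + 1 + 1) → _)
      ((a + b + 1).choose b) := by
  have hcard (t : ℕ) : #(univ : Finset ζ) + #(univ : Finset φ) + t = 2 * a + 2 * b + 2 + t := by
    rw [card_univ, card_univ, hζ, hφ]
    ring
  have huniv : (univ : Finset (ζ ⊕ φ ⊕ Fin 7)) = univ.disjSum (univ.disjSum univ) := by
    rw [univ_disjSum_univ, univ_disjSum_univ]
  have h34 := hasDegreeTable_formSign_erase_three_four (univ : Finset ζ) (univ : Finset φ)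
    (2 * a + 2 * b + 4) (hcard 5)
  have h03 := hasDegreeTable_formSign_erase_zero_three (univ : Finset ζ) (univ : Finset φ)
    (2 * a + 2 * b + 4) (hcard 5)
  have h01 := hasDegreeTable_formSign_erase_zero_one (univ : Finset ζ) (univ : Finset φ)
    (2 * a + 2 * b + 4) (hcard 5)
  rw [card_univ, card_univ, hζ, hφ, divLinear_formSign_erase_three_four ha] at h34
  rw [card_univ, card_univ, hζ, hφ, divLinear_formSign_erase_zero_one] at h01
  have h3 := hasDegree_frame_cons_pair (c := 4) (c' := 0) (by decide) (by decide) (by decide)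
    (hcard 6) h34 (erase_right_comm (s := (univ : Finset (Fin 7))) ▸ h03)
  have h0 := hasDegree_frame_cons_pair (c := 3) (c' := 1) (by decide) (by decide) (by decide)
    (hcard 6) h03 h01
  have h30 := hasDegree_frame_cons_pair (c := 3) (c' := 0) (by decide) (by decide) (by decide)
    (hcard 7) h3 h0
  rw [zero_add, CharTwo.add_cancel_left] at h30
  rw [huniv]
  exact h30

end FrameDegree

section LinearAlgebra

lemma odd_choose_two_pow_sub_one {k j : ℕ} (hj : j < 2 ^ k) : Odd ((2 ^ k - 1).choose j) := by
  induction j with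
  | zero => simp
  | succ j ih =>
    have heven : Even ((2 ^ k).choose (j + 1)) :=
      even_iff_two_dvd.2 (Nat.prime_two.dvd_choose_pow j.succ_ne_zero hj.ne)
    rw [Nat.choose_eq_choose_pred_add (by omega) j.succ_pos, Nat.even_add'] at heven
    exact heven.1 (ih (by omega))

lemma exists_linearMap_forall_mem_of_finrank_le {K V : Type*} [Field K] [AddCommGroup V]
    [Module K V] [FiniteDimensional K V] {L H : Submodule K V} (hLH : L ≤ H) {r : ℕ}
    (hr : Module.finrank K H ≤ Module.finrank K L + r) :
    ∃ π : V →ₗ[K] Fin r → K, ∀ x ∈ H, π x = 0 → x ∈ L := by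
  have hquotient : Module.finrank K (H ⧸ L.submoduleOf H) ≤ Module.finrank K (Fin r → K) := by
    have hsum := (L.submoduleOf H).finrank_quotient_add_finrank
    rw [(Submodule.submoduleOfEquivOfLe hLH).finrank_eq] at hsum
    rw [Module.finrank_fin_fun]
    omega
  obtain ⟨e, he⟩ := finrank_le_iff_exists_linearMap.1 hquotient
  obtain ⟨π, hπ⟩ := (e ∘ₗ (L.submoduleOf H).mkQ).exists_extend
  refine ⟨π, fun x hx hπx => ?_⟩
  have hex : e ((L.submoduleOf H).mkQ ⟨x, hx⟩) = 0 := by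
    rw [← hπx]
    exact (LinearMap.congr_fun hπ ⟨x, hx⟩).symm
  have hmk : (L.submoduleOf H).mkQ ⟨x, hx⟩ = 0 := he (hex.trans (map_zero e).symm)
  exact (Submodule.Quotient.mk_eq_zero (L.submoduleOf H)).1 hmk

lemma two_mul_finrank_selfAdjoint_le (A : Type*) [AddCommGroup A] [Module ℂ A] [StarAddMonoid A]
    [StarModule ℂ A] [FiniteDimensional ℝ A] :
    2 * Module.finrank ℝ (selfAdjoint.submodule ℝ A) ≤ Module.finrank ℝ A := by
  have : Module.Finite ℝ (selfAdjoint A) :=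
    inferInstanceAs (Module.Finite ℝ (selfAdjoint.submodule ℝ A))
  have : Module.Finite ℝ (skewAdjoint A) :=
    inferInstanceAs (Module.Finite ℝ (skewAdjoint.submodule ℝ A))
  have hsurj : Function.Surjective (skewAdjoint.negISMul (A := A)) := fun a =>
    ⟨⟨Complex.I • (a : A), (Complex.I_smul_mem_skewAdjoint_iff_isSelfAdjoint).2 a.2⟩,
      Subtype.ext (by simp [skewAdjoint.negISMul, smul_smul])⟩
  have hle := LinearMap.finrank_le_finrank_of_surjective hsurj
  have hsum := (StarModule.decomposeProdAdjoint ℝ A).finrank_eq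
  rw [Module.finrank_prod] at hsum
  change 2 * Module.finrank ℝ (selfAdjoint A) ≤ _
  omega

lemma finrank_selfAdjoint_matrix_le (q : ℕ) :
    Module.finrank ℝ (selfAdjoint.submodule ℝ (Matrix (Fin q) (Fin q) ℂ)) ≤ q ^ 2 := by
  have h := two_mul_finrank_selfAdjoint_le (Matrix (Fin q) (Fin q) ℂ)
  rw [Module.finrank_matrix, Complex.finrank_real_complex, Fintype.card_fin] at h
  nlinarith

lemma mul_mul_conjTranspose_ne_zero {m n : Type*} [Fintype m] [Fintype n] [DecidableEq n]
    {W : Matrix m n ℂ} {C : Matrix n n ℂ} (hW : IsUnit (Wᴴ * W)) (hC : C ≠ 0) :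
    W * C * Wᴴ ≠ 0 := by
  intro h
  have hgram : (Wᴴ * W) * C * (Wᴴ * W) = 0 := by
    calc (Wᴴ * W) * C * (Wᴴ * W) = Wᴴ * (W * C * Wᴴ) * W := by simp only [Matrix.mul_assoc]
      _ = 0 := by rw [h, Matrix.mul_zero, Matrix.zero_mul]
  exact hC ((hW.mul_right_eq_zero).1 ((hW.mul_left_eq_zero).1 hgram))

lemma posEigCount_add_negEigCount {n : Type*} [Fintype n] [DecidableEq n] {A : Matrix n n ℂ}
    (hA : A.IsHermitian) : posEigCount hA + negEigCount hA = A.rank := by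
  rw [hA.rank_eq_card_non_zero_eigs, Fintype.card_subtype, posEigCount, negEigCount,
    ← card_union_of_disjoint (disjoint_filter.2 fun i _ => lt_asymm), ← filter_or]
  exact congrArg card (filter_congr fun i _ => or_comm.trans ne_iff_lt_or_gt.symm)

end LinearAlgebra

section Matrices

variable {n : ℕ}

/-- The matrix whose columns are `(0, z)`, `(0, f)` and the first basis vector. -/
def frame (z f : Fin n → ℂ) : Matrix (Fin (n + 1)) (Fin 3) ℂ :=
  Matrix.of (Fin.cons ![0, 0, 1] fun i => ![z i, f i, 0])

/-- The Hermitian forms in three variables that do not couple the first variable with the last: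
`c 0`, `c 1`, `c 2` are the diagonal entries, with `c 0` in the last position. -/
noncomputable def hermForm (c : Fin 7 → ℝ) : Matrix (Fin 3) (Fin 3) ℂ :=
  !![(c 1 : ℂ), c 3 + c 4 * Complex.I, 0;
     c 3 - c 4 * Complex.I, (c 2 : ℂ), c 5 + c 6 * Complex.I;
     0, c 5 - c 6 * Complex.I, (c 0 : ℂ)]

/-- The Hermitian matrix supported on the span of a frame, with the given coefficients there. -/
noncomputable def frameForm (z f : Fin n → ℂ) (c : Fin 7 → ℝ) :
    Matrix (Fin (n + 1)) (Fin (n + 1)) ℂ :=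
  frame z f * hermForm c * (frame z f)ᴴ

lemma frame_conjTranspose_mul_self {z f : Fin n → ℂ} (hzf : star z ⬝ᵥ f = 0) :
    (frame z f)ᴴ * frame z f = diagonal ![star z ⬝ᵥ z, star f ⬝ᵥ f, 1] := by
  have hfz : star f ⬝ᵥ z = 0 := by rw [star_dotProduct, hzf, star_zero]
  simp only [dotProduct, Pi.star_apply, RCLike.star_def] at hzf hfz
  ext i j
  fin_cases i <;> fin_cases j <;>
    simp [frame, mul_apply, Fin.sum_univ_succ, dotProduct, hzf, hfz]

open scoped ComplexOrder in
lemma isUnit_frame_conjTranspose_mul_self {z f : Fin n → ℂ} (hz : z ≠ 0) (hf : f ≠ 0)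
    (hzf : star z ⬝ᵥ f = 0) : IsUnit ((frame z f)ᴴ * frame z f) := by
  rw [frame_conjTranspose_mul_self hzf, isUnit_diagonal, Pi.isUnit_iff]
  intro i
  fin_cases i <;> simp [hz, hf]

lemma isHermitian_hermForm (c : Fin 7 → ℝ) : (hermForm c).IsHermitian := by
  ext i j
  fin_cases i <;> fin_cases j <;> simp [hermForm, sub_eq_add_neg]

lemma hermForm_ne_zero {c : Fin 7 → ℝ} (hc : c ≠ 0) : hermForm c ≠ 0 := by
  refine fun h => hc ?_
  have h0 : c 0 = 0 := by simpa [hermForm] using congrArg Complex.re (congrFun₂ h 2 2)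
  have h1 : c 1 = 0 := by simpa [hermForm] using congrArg Complex.re (congrFun₂ h 0 0)
  have h2 : c 2 = 0 := by simpa [hermForm] using congrArg Complex.re (congrFun₂ h 1 1)
  have h3 : c 3 = 0 := by simpa [hermForm] using congrArg Complex.re (congrFun₂ h 0 1)
  have h4 : c 4 = 0 := by simpa [hermForm] using congrArg Complex.im (congrFun₂ h 0 1)
  have h5 : c 5 = 0 := by simpa [hermForm] using congrArg Complex.re (congrFun₂ h 1 2)
  have h6 : c 6 = 0 := by simpa [hermForm] using congrArg Complex.im (congrFun₂ h 1 2)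
  funext i
  fin_cases i <;> assumption

lemma isHermitian_frameForm (z f : Fin n → ℂ) (c : Fin 7 → ℝ) : (frameForm z f c).IsHermitian :=
  isHermitian_mul_mul_conjTranspose _ (isHermitian_hermForm c)

lemma rank_frameForm_le_three (z f : Fin n → ℂ) (c : Fin 7 → ℝ) : (frameForm z f c).rank ≤ 3 :=
  (rank_mul_le_right _ _).trans (rank_le_height _)

lemma frameForm_ne_zero {z f : Fin n → ℂ} {c : Fin 7 → ℝ} (hz : z ≠ 0) (hf : f ≠ 0) (hc : c ≠ 0)
    (hzf : star z ⬝ᵥ f = 0) : frameForm z f c ≠ 0 :=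
  mul_mul_conjTranspose_ne_zero (isUnit_frame_conjTranspose_mul_self hz hf hzf)
    (hermForm_ne_zero hc)

lemma continuous_frameForm {Y : Type*} [TopologicalSpace Y] {z f : Y → Fin n → ℂ}
    {c : Y → Fin 7 → ℝ} (hz : Continuous z) (hf : Continuous f) (hc : Continuous c) :
    Continuous fun y => frameForm (z y) (f y) (c y) := by
  have hframe : Continuous fun y => frame (z y) (f y) := by
    refine continuous_matrix fun i j => ?_
    refine Fin.cases ?_ (fun i => ?_) i <;> unfold frame <;> fin_cases j <;> fun_prop
  have hform : Continuous fun y => hermForm (c y) := by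
    refine continuous_matrix fun i j => ?_
    unfold hermForm
    fin_cases i <;> fin_cases j <;> fun_prop
  exact (hframe.matrix_mul hform).matrix_mul hframe.matrix_conjTranspose

/-- The change of basis that flips the first two frame vectors by the signs `ε` and `δ`. -/
noncomputable def flipMatrix (ε δ : ℤˣ) : Matrix (Fin 3) (Fin 3) ℂ :=
  diagonal ![((ε : ℤ) : ℂ), ((δ : ℤ) : ℂ), 1]

lemma flipMatrix_mul_self (ε δ : ℤˣ) : flipMatrix ε δ * flipMatrix ε δ = 1 := by
  rw [flipMatrix, diagonal_mul_diagonal, ← diagonal_one]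
  congr 1
  funext i
  rcases Int.units_eq_one_or ε with rfl | rfl <;> rcases Int.units_eq_one_or δ with rfl | rfl <;>
    fin_cases i <;> simp

lemma conjTranspose_flipMatrix (ε δ : ℤˣ) : (flipMatrix ε δ)ᴴ = flipMatrix ε δ := by
  rw [flipMatrix, diagonal_conjTranspose]
  congr 1
  funext i
  fin_cases i <;> simp

lemma frame_smul (ε δ : ℤˣ) (z f : Fin n → ℂ) :
    frame (ε • z) (δ • f) = frame z f * flipMatrix ε δ := by
  ext i j
  rw [flipMatrix, mul_diagonal]
  refine Fin.cases ?_ (fun i => ?_) i <;> fin_cases j <;>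
    simp [frame, Units.smul_def, mul_comm]

lemma hermForm_smul (ε δ η : ℤˣ) (c : Fin 7 → ℝ) :
    hermForm (fun i => (![1, 1, 1, ε * δ, ε * δ, δ, δ] i * η) • c i) =
      η • (flipMatrix ε δ * hermForm c * flipMatrix ε δ) := by
  ext i j
  rw [Matrix.smul_apply, flipMatrix, mul_diagonal, diagonal_mul]
  rcases Int.units_eq_one_or ε with rfl | rfl <;> rcases Int.units_eq_one_or δ with rfl | rfl <;>
    rcases Int.units_eq_one_or η with rfl | rfl <;> fin_cases i <;> fin_cases j <;>
      simp [hermForm] <;> ring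

lemma frameForm_smul (ε δ η : ℤˣ) (z f : Fin n → ℂ) (c : Fin 7 → ℝ) :
    frameForm (ε • z) (δ • f) (fun i => (![1, 1, 1, ε * δ, ε * δ, δ, δ] i * η) • c i) =
      η • frameForm z f c := by
  set D := flipMatrix ε δ with hD
  calc _ = frame z f * D * (η • (D * hermForm c * D)) * (D * (frame z f)ᴴ) := by
        rw [frameForm, frame_smul, hermForm_smul, conjTranspose_mul, conjTranspose_flipMatrix]
    _ = η • (frame z f * (D * D) * hermForm c * (D * D) * (frame z f)ᴴ) := by
        simp only [Matrix.mul_smul, Matrix.smul_mul, Matrix.mul_assoc]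
    _ = η • frameForm z f c := by
        rw [hD, flipMatrix_mul_self, Matrix.mul_one, Matrix.mul_one, frameForm]

end Matrices

section RankThree

lemma star_smul_dotProduct_smul {ι : Type*} [Fintype ι] (ε δ : ℤˣ) (v w : ι → ℂ) :
    star (ε • v) ⬝ᵥ (δ • w) = (ε * δ) • (star v ⬝ᵥ w) := by
  rcases Int.units_eq_one_or ε with rfl | rfl <;> rcases Int.units_eq_one_or δ with rfl | rfl <;>
    simp [Units.smul_def]

lemma linearMap_signFlip {ι κ β M N : Type*} [Fintype β] [AddCommGroup M] [Module ℝ M]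
    [AddCommGroup N] [Module ℝ N] (S : (κ → M) →ₗ[ℝ] N) {χ : ι → β → ZMod 2} {e : κ → ι}
    {ψ : β → ZMod 2} (hψ : ∀ i, χ (e i) = ψ) (g : β → ZMod 2) (x : ι → M) :
    (S fun i => signFlip χ g x (e i)) = (-1 : ℤˣ) ^ (ψ ⬝ᵥ g) • S fun i => x (e i) := by
  rw [Units.smul_def, ← map_zsmul]
  congr 1
  funext i
  rw [signFlip, hψ, Units.smul_def, Pi.smul_apply]

variable {ζ φ : Type*} {n : ℕ}

/-- The Hermitian product of the two free frame vectors, which are given through `S` and `T` by the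
coordinates in `ζ` and `φ`. -/
noncomputable def coordInner (S : (ζ → ℝ) →ₗ[ℝ] Fin n → ℂ) (T : (φ → ℝ) →ₗ[ℝ] Fin n → ℂ)
    (x : ζ ⊕ φ ⊕ Fin 7 → ℝ) : ℂ :=
  star (S fun i => x (.inl i)) ⬝ᵥ T fun i => x (.inr (.inl i))

/-- The Hermitian matrix with coordinates `x`: the coordinates in `ζ` and `φ` give the two free
frame vectors through `S` and `T`, the remaining ones give the form. -/
noncomputable def coordForm (S : (ζ → ℝ) →ₗ[ℝ] Fin n → ℂ) (T : (φ → ℝ) →ₗ[ℝ] Fin n → ℂ)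
    (x : ζ ⊕ φ ⊕ Fin 7 → ℝ) : Matrix (Fin (n + 1)) (Fin (n + 1)) ℂ :=
  frameForm (S fun i => x (.inl i)) (T fun i => x (.inr (.inl i))) fun i => x (.inr (.inr i))

lemma linearMap_signFlip_inl (S : (ζ → ℝ) →ₗ[ℝ] Fin n → ℂ) (g : Fin 3 → ZMod 2)
    (x : ζ ⊕ φ ⊕ Fin 7 → ℝ) :
    (S fun i => signFlip (frameCharacter formSign) g x (.inl i)) =
      (-1 : ℤˣ) ^ (![1, 0, 0] ⬝ᵥ g) • S fun i => x (.inl i) :=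
  linearMap_signFlip (e := Sum.inl) S (fun _ => rfl) g x

lemma linearMap_signFlip_inr_inl (T : (φ → ℝ) →ₗ[ℝ] Fin n → ℂ) (g : Fin 3 → ZMod 2)
    (x : ζ ⊕ φ ⊕ Fin 7 → ℝ) :
    (T fun i => signFlip (frameCharacter formSign) g x (.inr (.inl i))) =
      (-1 : ℤˣ) ^ (![0, 1, 0] ⬝ᵥ g) • T fun i => x (.inr (.inl i)) :=
  linearMap_signFlip (e := fun i => Sum.inr (Sum.inl i)) T (fun _ => rfl) g x

variable (S : (ζ → ℝ) →ₗ[ℝ] Fin n → ℂ) (T : (φ → ℝ) →ₗ[ℝ] Fin n → ℂ)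

lemma coordInner_signFlip (g : Fin 3 → ZMod 2) (x : ζ ⊕ φ ⊕ Fin 7 → ℝ) :
    coordInner S T (signFlip (frameCharacter formSign) g x) =
      (-1 : ℤˣ) ^ (![1, 1, 0] ⬝ᵥ g) • coordInner S T x := by
  have hcharacter : (![1, 1, 0] : Fin 3 → ZMod 2) = ![1, 0, 0] + ![0, 1, 0] := by decide
  rw [coordInner, linearMap_signFlip_inl, linearMap_signFlip_inr_inl, star_smul_dotProduct_smul,
    ← uzpow_add, ← add_dotProduct, ← hcharacter, coordInner]

lemma coordForm_signFlip (g : Fin 3 → ZMod 2) (x : ζ ⊕ φ ⊕ Fin 7 → ℝ) :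
    coordForm S T (signFlip (frameCharacter formSign) g x) =
      (-1 : ℤˣ) ^ (![0, 0, 1] ⬝ᵥ g) • coordForm S T x := by
  rw [coordForm, linearMap_signFlip_inl, linearMap_signFlip_inr_inl,
    coordForm, ← frameForm_smul]
  congr 1
  funext i
  fin_cases i <;> simp [signFlip, frameCharacter, formSign, uzpow_add, mul_assoc]

lemma isSignEquivariant_re_coordInner :
    IsSignEquivariant (frameCharacter formSign) ![1, 1, 0] fun x => (coordInner S T x).re := by
  intro g x
  simp only [coordInner_signFlip, Units.smul_def, Complex.smul_re]

lemma isSignEquivariant_im_coordInner :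
    IsSignEquivariant (frameCharacter formSign) ![1, 1, 0] fun x => (coordInner S T x).im := by
  intro g x
  simp only [coordInner_signFlip, Units.smul_def, Complex.smul_im]

lemma isSignEquivariant_apply_coordForm {ρ : Type*}
    (π : Matrix (Fin (n + 1)) (Fin (n + 1)) ℂ →ₗ[ℝ] ρ → ℝ) (i : ρ) :
    IsSignEquivariant (frameCharacter formSign) ![0, 0, 1] fun x => π (coordForm S T x) i := by
  intro g x
  simp only [coordForm_signFlip, Units.smul_def, map_zsmul, Pi.smul_apply]

variable {S T} in
lemma coordForm_ne_zero (hS : Function.Injective S) (hT : Function.Injective T)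
    {x : ζ ⊕ φ ⊕ Fin 7 → ℝ} (hx : x ∈ cubeBoundaryProd frameBlock) (hST : coordInner S T x = 0) :
    coordForm S T x ≠ 0 := by
  have hblock (b : Fin 3) : ∃ k, frameBlock k = b ∧ x k ≠ 0 := by
    obtain ⟨k, hk, hxk⟩ := hx.2 b
    exact ⟨k, hk, abs_pos.1 (hxk ▸ one_pos)⟩
  refine frameForm_ne_zero ((map_ne_zero_iff S hS).2 ?_) ((map_ne_zero_iff T hT).2 ?_) ?_ hST
  · obtain ⟨i | i | i, hi, hxi⟩ := hblock 0
    · exact Function.ne_iff.2 ⟨i, hxi⟩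
    · cases hi
    · cases hi
  · obtain ⟨i | i | i, hi, hxi⟩ := hblock 1
    · cases hi
    · exact Function.ne_iff.2 ⟨i, hxi⟩
    · cases hi
  · obtain ⟨i | i | i, hi, hxi⟩ := hblock 2
    · cases hi
    · cases hi
    · exact Function.ne_iff.2 ⟨i, hxi⟩

variable [Finite ζ] [Finite φ]

lemma continuous_coordInner : Continuous (coordInner S T) := by
  have hS : Continuous S := S.continuous_of_finiteDimensional
  have hT : Continuous T := T.continuous_of_finiteDimensional
  unfold coordInner
  fun_prop

lemma continuous_coordForm : Continuous (coordForm S T) := by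
  have hS : Continuous S := S.continuous_of_finiteDimensional
  have hT : Continuous T := T.continuous_of_finiteDimensional
  exact continuous_frameForm (by fun_prop) (by fun_prop) (by fun_prop)

lemma exists_coordForm_mem_ker {a : ℕ} (ha : 0 < a) (hodd : Odd ((2 * a + 1).choose a))
    (S : (Fin (2 * a + 1) → ℝ) →ₗ[ℝ] Fin n → ℂ)
    (π : Matrix (Fin (n + 1)) (Fin (n + 1)) ℂ →ₗ[ℝ] Fin (2 * a + 2 * a + 4) → ℝ) :
    ∃ x ∈ cubeBoundaryProd frameBlock, coordInner S S x = 0 ∧ π (coordForm S S x) = 0 := by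
  have hπ : Continuous π := π.continuous_of_finiteDimensional
  have hinner := continuous_coordInner S S
  have hform := continuous_coordForm S S
  have hdeg := hasDegree_formSign ha (Fintype.card_fin (2 * a + 1)) (Fintype.card_fin (2 * a + 1))
  have hne : (((a + a + 1).choose a : ℕ) : ZMod 2) ≠ 0 := by
    rwa [← two_mul, ZMod.natCast_ne_zero_iff_odd]
  obtain ⟨x, hx, hzero⟩ := hdeg.exists_forall_eq_zero (isTransversal_frameCharacter formSign) hne
    (Φ := Fin.cons (fun x => (coordInner S S x).re)
      (Fin.cons (fun x => (coordInner S S x).im) fun i x => π (coordForm S S x) i))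
    (Fin.cases (Complex.continuous_re.comp hinner) (Fin.cases (Complex.continuous_im.comp hinner)
      (continuous_pi_iff.1 (hπ.comp hform))))
    (Fin.cases (isSignEquivariant_re_coordInner S S) (Fin.cases
      (isSignEquivariant_im_coordInner S S) (isSignEquivariant_apply_coordForm S S π)))
  exact ⟨x, hx, Complex.ext (hzero 0) (hzero 1), funext fun i => hzero i.succ.succ⟩

theorem exists_mem_ne_zero_rank_le_three {a : ℕ} (ha : 0 < a) (hodd : Odd ((2 * a + 1).choose a))
    {L : Submodule ℝ (Matrix (Fin (a + 2)) (Fin (a + 2)) ℂ)} (hherm : ∀ X ∈ L, X.IsHermitian)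
    (hL : (a + 2) ^ 2 ≤ Module.finrank ℝ L + 4 * (a + 1)) : ∃ X ∈ L, X ≠ 0 ∧ X.rank ≤ 3 := by
  have hcodim := (finrank_selfAdjoint_matrix_le (a + 2)).trans hL
  rw [show 4 * (a + 1) = 2 * a + 2 * a + 4 by ring] at hcodim
  obtain ⟨π, hπ⟩ := exists_linearMap_forall_mem_of_finrank_le hherm hcodim
  have hdim : Module.finrank ℝ (Fin (2 * a + 1) → ℝ) ≤ Module.finrank ℝ (Fin (a + 1) → ℂ) := by
    rw [Module.finrank_fin_fun, Module.finrank_pi_fintype, sum_const, card_univ, Fintype.card_fin,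
      Complex.finrank_real_complex, smul_eq_mul]
    omega
  obtain ⟨S, hS⟩ := finrank_le_iff_exists_linearMap.1 hdim
  obtain ⟨x, hx, horth, hker⟩ := exists_coordForm_mem_ker ha hodd S π
  exact ⟨coordForm S S x, hπ _ (isHermitian_frameForm _ _ _) hker,
    coordForm_ne_zero hS hS hx horth, rank_frameForm_le_three _ _ _⟩

end RankThree

theorem dim_bound_of_min_inertia_ge_two_general (k q : ℕ) (hk : 1 ≤ k) (hq : q = 2 ^ k + 1)
    (L : Submodule ℝ (Matrix (Fin q) (Fin q) ℂ)) (hherm : ∀ X ∈ L, X.IsHermitian)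
    (hrank : ∀ X ∈ L, X ≠ 0 → 4 ≤ X.rank) : Module.finrank ℝ L ≤ q ^ 2 - (4 * q - 3) := by
  obtain ⟨a, ha⟩ : ∃ a, 2 ^ k = a + 1 := Nat.exists_eq_add_one.2 (by positivity)
  have hpos : 0 < a := by
    have := Nat.pow_le_pow_right two_pos hk
    omega
  have hodd : Odd ((2 * a + 1).choose a) := by
    have hpow : 2 ^ (k + 1) - 1 = 2 * a + 1 := by omega
    exact hpow ▸ odd_choose_two_pow_sub_one (by omega)
  obtain rfl : q = a + 2 := by omega
  by_contra! hL
  obtain ⟨X, hX, hX0, hX3⟩ := exists_mem_ne_zero_rank_le_three hpos hodd hherm (by omega)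
  exact absurd (hrank X hX hX0) (by omega)

theorem dim_bound_of_min_inertia_ge_two (k q : ℕ) (hk : 2 ≤ k) (hq : q = 2 ^ k + 1)
    (L : Submodule ℝ (Matrix (Fin q) (Fin q) ℂ))
    (hherm : ∀ X ∈ L, X.IsHermitian)
    (hinertia : ∀ X ∈ L, X ≠ 0 → ∀ hX : Matrix.IsHermitian X,
      2 ≤ posEigCount hX ∧ 2 ≤ negEigCount hX) :
    Module.finrank ℝ L ≤ q ^ 2 - (4 * q - 3) := by
  exact dim_bound_of_min_inertia_ge_two_general k q (by omega) hq L hherm fun X hX hX0 => by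
    linarith [hinertia X hX hX0 (hherm X hX), posEigCount_add_negEigCount (hherm X hX)]
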